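/- arXiv:1707.08210 — 3 statements merged into one kernel-verified Lean document; each statement's English description precedes it below -/
import Mathlib

section
/- Let (α_k)_{k≥1} be the increasing enumeration of the moduli of the zeros of U₋ on the open ray arg z = π/3, and set ε_k = (√3·α_k/2)³. For every ε > 0 and λ ∈ ℂ, one has W(ε,λ) = 0 and ∂W/∂λ(ε,λ) = 0 if and only if λ = 1/√3 and ε = ε_k for some k ≥ 1; moreover at every such point the second derivative ∂²W/∂λ²(ε_k, 1/√3) is nonzero. In other words, the multiple eigenvalues of the model family T(ε) occur exactly at the parameter values ε_k, always at the knot point λ = 1/√3, and always with algebraic multiplicity exactly 2. -/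
open Complex MeasureTheory Real

noncomputable section

/-- `w` is an entire solution of the Airy equation `w'' = z·w`
with prescribed (real) values of `w` and `w'` at the origin. -/
def IsAiry (w : ℂ → ℂ) (w0 w0' : ℝ) : Prop :=
  Differentiable ℂ w ∧ Differentiable ℂ (deriv w) ∧
  (∀ z : ℂ, deriv (deriv w) z = z * w z) ∧
  w 0 = (w0 : ℂ) ∧ deriv w 0 = (w0' : ℂ)

/-- `Ai` is the standard Airy function of the first kind. -/
def IsAiryAi (Ai : ℂ → ℂ) : Prop :=
  IsAiry Ai ((3 : ℝ) ^ (-(2 : ℝ)/3) / Real.Gamma (2/3))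
    (-((3 : ℝ) ^ (-(1 : ℝ)/3)) / Real.Gamma (1/3))

/-- `Bi` is the standard Airy function of the second kind. -/
def IsAiryBi (Bi : ℂ → ℂ) : Prop :=
  IsAiry Bi ((3 : ℝ) ^ (-(1 : ℝ)/6) / Real.Gamma (2/3))
    ((3 : ℝ) ^ ((1 : ℝ)/6) / Real.Gamma (1/3))

/-- `U₋ = -√3·Ai + Bi`. -/
def Uminus (Ai Bi : ℂ → ℂ) : ℂ → ℂ := fun z => -(Real.sqrt 3 : ℂ) * Ai z + Bi z

/-- `U₊ = √3·Ai + Bi`. -/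
def Uplus (Ai Bi : ℂ → ℂ) : ℂ → ℂ := fun z => (Real.sqrt 3 : ℂ) * Ai z + Bi z

/-- The moduli of the zeros of `U` on the open ray `arg z = π/3`. -/
def rayZeroModuli (U : ℂ → ℂ) : Set ℝ :=
  {r : ℝ | 0 < r ∧ U ((r : ℂ) * Complex.exp ((π/3 : ℝ) * Complex.I)) = 0}

/-- The characteristic determinant `W(ε,λ)` of the model problem
`-ε⁻¹ y'' + i x y = λ y`, `y(-1) = y(1) = 0`. -/
def airyW (Ai Bi : ℂ → ℂ) (ε : ℝ) (lam : ℂ) : ℂ :=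
  Ai ((ε ^ ((1:ℝ)/3) : ℝ) * (lam + Complex.I)) * Bi ((ε ^ ((1:ℝ)/3) : ℝ) * (lam - Complex.I))
  - Ai ((ε ^ ((1:ℝ)/3) : ℝ) * (lam - Complex.I)) * Bi ((ε ^ ((1:ℝ)/3) : ℝ) * (lam + Complex.I))

/-- `w` is an entire solution of the Airy equation. -/
structure SolvesAiry (w : ℂ → ℂ) : Prop where
  diff : Differentiable ℂ w
  diff_deriv : Differentiable ℂ (deriv w)
  eqn : ∀ z, deriv (deriv w) z = z * w z

lemma IsAiry.solves {w : ℂ → ℂ} {a b : ℝ} (h : IsAiry w a b) : SolvesAiry w :=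
  ⟨h.1, h.2.1, h.2.2.1⟩

lemma SolvesAiry.of_hasDerivAt {w w' : ℂ → ℂ} (h : ∀ z, HasDerivAt w (w' z) z)
    (h' : ∀ z, HasDerivAt w' (z * w z) z) : SolvesAiry w := by
  have e : deriv w = w' := funext fun z => (h z).deriv
  exact ⟨fun z => (h z).differentiableAt, e ▸ fun z => (h' z).differentiableAt,
    fun z => by rw [e, (h' z).deriv]⟩

namespace SolvesAiry

variable {u v : ℂ → ℂ}

lemma hasDerivAt (hu : SolvesAiry u) (z : ℂ) : HasDerivAt u (deriv u z) z :=
  (hu.diff z).hasDerivAt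

lemma hasDerivAt_deriv (hu : SolvesAiry u) (z : ℂ) : HasDerivAt (deriv u) (z * u z) z :=
  hu.eqn z ▸ (hu.diff_deriv z).hasDerivAt

lemma linComb (hu : SolvesAiry u) (hv : SolvesAiry v) (a b : ℂ) :
    SolvesAiry (fun z => a * u z + b * v z) :=
  of_hasDerivAt (fun z => ((hu.hasDerivAt z).const_mul a).add ((hv.hasDerivAt z).const_mul b))
    (fun z => (((hu.hasDerivAt_deriv z).const_mul a).add
      ((hv.hasDerivAt_deriv z).const_mul b)).congr_deriv (by ring))

lemma deriv_linComb (hu : SolvesAiry u) (hv : SolvesAiry v) (a b z : ℂ) :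
    deriv (fun z => a * u z + b * v z) z = a * deriv u z + b * deriv v z :=
  (((hu.hasDerivAt z).const_mul a).add ((hv.hasDerivAt z).const_mul b)).deriv

/-- The restriction of a solution to a real line in `ℂ`. -/
lemma hasDerivAt_line (hu : SolvesAiry u) (p c : ℂ) (t : ℝ) :
    HasDerivAt (fun t : ℝ => u (p + t * c)) (c * deriv u (p + t * c)) t := by
  have h : HasDerivAt (fun z : ℂ => u (p + z * c)) (deriv u (p + t * c) * (1 * c)) (t : ℂ) :=
    (hu.hasDerivAt _).comp (t : ℂ) (((hasDerivAt_id _).mul_const c).const_add p)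
  exact h.comp_ofReal.congr_deriv (by ring)

lemma hasDerivAt_deriv_line (hu : SolvesAiry u) (p c : ℂ) (t : ℝ) :
    HasDerivAt (fun t : ℝ => deriv u (p + t * c))
      (c * ((p + t * c) * u (p + t * c))) t := by
  have h : HasDerivAt (fun z : ℂ => deriv u (p + z * c))
      ((p + t * c) * u (p + t * c) * (1 * c)) (t : ℂ) :=
    (hu.hasDerivAt_deriv _).comp (t : ℂ) (((hasDerivAt_id _).mul_const c).const_add p)
  exact h.comp_ofReal.congr_deriv (by ring)

lemma norm_le (hu : SolvesAiry u) (z : ℂ) :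
    ‖u z‖ ≤ ‖(u 0, deriv u 0)‖ * Real.exp (‖z‖ * (1 + ‖z‖)) := by
  have key := norm_le_gronwallBound_of_norm_deriv_right_le (E := ℂ × ℂ)
    (f := fun t : ℝ => (u (0 + t * z), deriv u (0 + t * z)))
    (f' := fun t : ℝ => (z * deriv u (0 + t * z), z * ((0 + t * z) * u (0 + t * z))))
    (δ := ‖(u 0, deriv u 0)‖) (K := ‖z‖ * (1 + ‖z‖)) (ε := 0) (a := 0) (b := 1)
    (fun t _ => ((hu.hasDerivAt_line 0 z t).prodMk
      (hu.hasDerivAt_deriv_line 0 z t)).continuousAt.continuousWithinAt)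
    (fun t _ => ((hu.hasDerivAt_line 0 z t).prodMk
      (hu.hasDerivAt_deriv_line 0 z t)).hasDerivWithinAt) (by simp) ?_ 1 (by simp)
  · rw [gronwallBound_ε0] at key
    refine (le_trans ?_ key).trans (by simp)
    simp
  · intro t ht
    have h1 := norm_fst_le (u (0 + t * z), deriv u (0 + t * z))
    have h2 := norm_snd_le (u (0 + t * z), deriv u (0 + t * z))
    simp only at h1 h2
    rw [add_zero]
    have hz := norm_nonneg z
    refine max_le ?_ ?_
    · simp only [norm_mul]
      nlinarith [mul_le_mul_of_nonneg_left h2 hz, mul_nonneg (mul_nonneg hz hz)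
        (norm_nonneg (u (0 + t * z), deriv u (0 + t * z)))]
    · have ht' : ‖(t : ℂ)‖ ≤ 1 := by
        rw [Complex.norm_real, Real.norm_of_nonneg ht.1]; exact ht.2.le
      have h3 : ‖(0 + t * z : ℂ)‖ ≤ ‖z‖ := by
        rw [zero_add, norm_mul]; nlinarith
      simp only [norm_mul]
      have h4 := mul_le_mul h3 h1 (norm_nonneg _) hz
      nlinarith [mul_le_mul_of_nonneg_left h4 hz, mul_nonneg hz
        (norm_nonneg (u (0 + t * z), deriv u (0 + t * z)))]

/-- A solution is determined by its initial data at the origin. -/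
lemma eq_of_init (hu : SolvesAiry u) (hv : SolvesAiry v) (h0 : u 0 = v 0)
    (h1 : deriv u 0 = deriv v 0) : u = v := by
  funext z
  have h := (hu.linComb hv 1 (-1)).norm_le z
  rw [hu.deriv_linComb hv, h0, h1] at h
  have : ‖1 * u z + -1 * v z‖ ≤ 0 := by simpa using h
  have h2 := norm_le_zero_iff.1 this
  linear_combination h2

lemma rotate (hu : SolvesAiry u) {c : ℂ} (hc : c ^ 3 = 1) : SolvesAiry (fun z => u (c * z)) :=
  of_hasDerivAt (w' := fun z => c * deriv u (c * z))
    (fun z => ((hu.hasDerivAt (c * z)).comp z ((hasDerivAt_id z).const_mul c)).congr_deriv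
      (by ring))
    (fun z => (((hu.hasDerivAt_deriv (c * z)).comp z
      ((hasDerivAt_id z).const_mul c)).const_mul c).congr_deriv
      (by linear_combination z * u (c * z) * hc))

lemma deriv_rotate (hu : SolvesAiry u) (c z : ℂ) :
    deriv (fun z => u (c * z)) z = c * deriv u (c * z) :=
  (((hu.hasDerivAt (c * z)).comp z ((hasDerivAt_id z).const_mul c)).congr_deriv (by ring)).deriv

lemma wronskian_eq (hu : SolvesAiry u) (hv : SolvesAiry v) (z : ℂ) :
    u z * deriv v z - deriv u z * v z = u 0 * deriv v 0 - deriv u 0 * v 0 := by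
  have h : ∀ z, HasDerivAt (fun z => u z * deriv v z - deriv u z * v z) 0 z := fun z =>
    (((hu.hasDerivAt z).mul (hv.hasDerivAt_deriv z)).sub
      ((hu.hasDerivAt_deriv z).mul (hv.hasDerivAt z))).congr_deriv (by ring)
  exact is_const_of_deriv_eq_zero (fun z => (h z).differentiableAt) (fun z => (h z).deriv) z 0

end SolvesAiry

open ComplexConjugate in
lemma IsAiry.conj_apply {w : ℂ → ℂ} {a b : ℝ} (h : IsAiry w a b) (z : ℂ) :
    w (conj z) = conj (w z) := by
  have hs := h.solves
  have hd : ∀ z, HasDerivAt (conj ∘ w ∘ conj) (conj (deriv w (conj z))) z := fun z => by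
    simpa using (hs.hasDerivAt (conj z)).conj_conj
  have hd' : ∀ z, HasDerivAt (conj ∘ deriv w ∘ conj) (z * (conj ∘ w ∘ conj) z) z := fun z => by
    simpa using (hs.hasDerivAt_deriv (conj z)).conj_conj
  have hc : SolvesAiry (conj ∘ w ∘ conj) := SolvesAiry.of_hasDerivAt hd hd'
  have := hc.eq_of_init hs (by simp [h.2.2.2.1]) (by rw [(hd 0).deriv]; simp [h.2.2.2.2])
  have h2 := congrFun this z
  simp only [Function.comp] at h2
  rw [← h2, Complex.conj_conj]

open ComplexConjugate in
lemma IsAiry.deriv_conj_apply {w : ℂ → ℂ} {a b : ℝ} (h : IsAiry w a b) (z : ℂ) :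
    deriv w (conj z) = conj (deriv w z) := by
  have e : conj ∘ w ∘ conj = w := funext fun z => by simp [h.conj_apply]
  have := (h.solves.hasDerivAt (conj z)).conj_conj
  rw [e, Complex.conj_conj] at this
  rw [this.deriv, Complex.conj_conj]

/-- The moments `∫₀^∞ rⁿ exp(-r³/3 - c z r) dr`. -/
def airyMoment (c : ℂ) (n : ℕ) (z : ℂ) : ℂ :=
  ∫ r in Set.Ioi (0 : ℝ), (r : ℂ) ^ n * Complex.exp (-(r : ℂ) ^ 3 / 3 - c * z * r)

lemma neg_cube_add_le (B : ℝ) {r : ℝ} (hr : 0 < r) :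
    -r ^ 3 / 3 + B * r ≤ (|B| + 1) * (3 * (|B| + 1) + 1) - r := by
  have hB : B * r ≤ |B| * r := mul_le_mul_of_nonneg_right (le_abs_self B) hr.le
  have h0 := abs_nonneg B
  set M := |B| + 1 with hM
  suffices M * r ≤ M * (3 * M + 1) + r ^ 3 / 3 by nlinarith
  rcases le_total r (3 * M + 1) with h | h
  · have : 0 ≤ r ^ 3 := by positivity
    nlinarith [mul_le_mul_of_nonneg_left h (show 0 ≤ M by linarith)]
  · have h1 : 3 * M ≤ r ^ 2 := by nlinarith
    nlinarith [mul_le_mul_of_nonneg_right h1 hr.le]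

lemma integrableOn_pow_mul_exp_neg_cube (n : ℕ) (B : ℝ) :
    IntegrableOn (fun r : ℝ => r ^ n * Real.exp (-r ^ 3 / 3 + B * r)) (Set.Ioi 0) := by
  have h := (Real.GammaIntegral_convergent (s := n + 1) (by positivity)).const_mul
    (Real.exp ((|B| + 1) * (3 * (|B| + 1) + 1)))
  refine Integrable.mono' h (by fun_prop) ?_
  filter_upwards [ae_restrict_mem measurableSet_Ioi] with r hr
  have hr : 0 < r := hr
  rw [Real.norm_of_nonneg (by positivity), add_sub_cancel_right, Real.rpow_natCast, ← mul_assoc,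
    ← Real.exp_add, mul_comm]
  exact mul_le_mul_of_nonneg_right (Real.exp_le_exp.2 (neg_cube_add_le B hr)) (by positivity)

lemma norm_airyMoment_integrand (c z : ℂ) (n : ℕ) {r : ℝ} (hr : 0 < r) :
    ‖(r : ℂ) ^ n * Complex.exp (-(r : ℂ) ^ 3 / 3 - c * z * r)‖ =
      r ^ n * Real.exp (-r ^ 3 / 3 + -(c * z).re * r) := by
  rw [norm_mul, norm_pow, Complex.norm_real, Real.norm_of_nonneg hr.le, Complex.norm_exp]
  congr 2
  have : (-(r : ℂ) ^ 3 / 3 - c * z * r) = ((-r ^ 3 / 3 : ℝ) : ℂ) - c * z * r := by push_cast; ring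
  rw [this, Complex.sub_re, Complex.ofReal_re, Complex.re_mul_ofReal]
  ring

lemma integrable_airyMoment (c z : ℂ) (n : ℕ) :
    Integrable (fun r : ℝ => (r : ℂ) ^ n * Complex.exp (-(r : ℂ) ^ 3 / 3 - c * z * r))
      (volume.restrict (Set.Ioi 0)) := by
  refine Integrable.mono' (integrableOn_pow_mul_exp_neg_cube n (-(c * z).re))
    (by fun_prop) ?_
  filter_upwards [ae_restrict_mem measurableSet_Ioi] with r hr
  exact (norm_airyMoment_integrand c z n hr).le

lemma hasDerivAt_airyMoment (c : ℂ) (n : ℕ) (z : ℂ) :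
    HasDerivAt (airyMoment c n) (-c * airyMoment c (n + 1) z) z := by
  have key := (hasDerivAt_integral_of_dominated_loc_of_deriv_le (𝕜 := ℂ)
    (μ := volume.restrict (Set.Ioi (0 : ℝ)))
    (F := fun z (r : ℝ) => (r : ℂ) ^ n * Complex.exp (-(r : ℂ) ^ 3 / 3 - c * z * r))
    (F' := fun z (r : ℝ) => -c * ((r : ℂ) ^ (n + 1) * Complex.exp (-(r : ℂ) ^ 3 / 3 - c * z * r)))
    (bound := fun r => ‖c‖ * (r ^ (n + 1) * Real.exp (-r ^ 3 / 3 + (‖c‖ * (‖z‖ + 1)) * r)))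
    (x₀ := z) (Metric.ball_mem_nhds z one_pos)
    (Filter.Eventually.of_forall fun w => (integrable_airyMoment c w n).1)
    (integrable_airyMoment c z n)
    ((integrable_airyMoment c z (n + 1)).const_mul (-c)).1
    ?_ ((integrableOn_pow_mul_exp_neg_cube (n + 1) _).const_mul _) ?_).2
  · rw [integral_const_mul] at key
    exact key
  · filter_upwards [ae_restrict_mem measurableSet_Ioi] with r hr w hw
    have hr : 0 < r := hr
    rw [norm_mul, norm_neg, norm_airyMoment_integrand c w (n + 1) hr]
    gcongr
    have h1 : ‖w‖ ≤ ‖z‖ + 1 := by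
      have := norm_sub_norm_le w z
      rw [Metric.mem_ball, dist_eq_norm] at hw
      linarith
    calc -(c * w).re ≤ ‖c * w‖ := (neg_le_abs _).trans (Complex.abs_re_le_norm _)
      _ = ‖c‖ * ‖w‖ := norm_mul _ _
      _ ≤ _ := by gcongr
  · refine Filter.Eventually.of_forall fun r w _ => ?_
    have : HasDerivAt (fun w : ℂ => -(r : ℂ) ^ 3 / 3 - c * w * r) (-(c * 1 * r)) w :=
      (((hasDerivAt_id w).const_mul c).mul_const (r : ℂ)).const_sub _
    exact (this.cexp.const_mul ((r : ℂ) ^ n)).congr_deriv (by ring)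

/-- Integration by parts for the moments. -/
lemma airyMoment_two (c z : ℂ) :
    airyMoment c 2 z = 1 - c * z * airyMoment c 0 z := by
  have hd : ∀ r ∈ Set.Ici (0 : ℝ), HasDerivAt
      (fun r : ℝ => Complex.exp (-(r : ℂ) ^ 3 / 3 - c * z * r))
      (-((r : ℂ) ^ 2 * Complex.exp (-(r : ℂ) ^ 3 / 3 - c * z * r)) +
        -(c * z) * ((r : ℂ) ^ 0 * Complex.exp (-(r : ℂ) ^ 3 / 3 - c * z * r))) r := fun r _ => by
    have h1 : HasDerivAt (fun s : ℂ => -s ^ 3 / 3 - c * z * s)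
        (-((3 : ℕ) * (r : ℂ) ^ (3 - 1)) / 3 - c * z * 1) (r : ℂ) :=
      ((hasDerivAt_pow 3 (r : ℂ)).neg.div_const 3).sub ((hasDerivAt_id _).const_mul (c * z))
    exact h1.cexp.comp_ofReal.congr_deriv (by push_cast; ring)
  have ht : Filter.Tendsto (fun r : ℝ => Complex.exp (-(r : ℂ) ^ 3 / 3 - c * z * r))
      Filter.atTop (nhds 0) := by
    have hlim : Filter.Tendsto (fun r : ℝ => Real.exp ((|-(c * z).re| + 1) *
        (3 * (|-(c * z).re| + 1) + 1) - r)) Filter.atTop (nhds 0) :=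
      Real.tendsto_exp_atBot.comp (Filter.tendsto_atBot_add_const_left _ _
        Filter.tendsto_neg_atTop_atBot)
    refine squeeze_zero_norm' ?_ hlim
    filter_upwards [Filter.eventually_gt_atTop 0] with r hr
    have := norm_airyMoment_integrand c z 0 hr
    rw [pow_zero, one_mul, pow_zero, one_mul] at this
    rw [this]
    exact Real.exp_le_exp.2 (neg_cube_add_le _ hr)
  have hi : Integrable (fun r : ℝ => -((r : ℂ) ^ 2 *
      Complex.exp (-(r : ℂ) ^ 3 / 3 - c * z * r))) (volume.restrict (Set.Ioi 0)) :=
    (integrable_airyMoment c z 2).neg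
  have key := integral_Ioi_of_hasDerivAt_of_tendsto' hd
    (hi.add ((integrable_airyMoment c z 0).const_mul (-(c * z)))) ht
  rw [integral_add hi ((integrable_airyMoment c z 0).const_mul (-(c * z))), integral_neg,
    integral_const_mul] at key
  change -airyMoment c 2 z + -(c * z) * airyMoment c 0 z = _ at key
  simp only [Complex.ofReal_zero, mul_zero, sub_zero, Complex.exp_zero, zero_pow three_ne_zero,
    neg_zero, zero_div] at key
  linear_combination -key

lemma norm_airyMoment_le (c z : ℂ) (n : ℕ) (h : 0 < (c * z).re) :
    ‖airyMoment c n z‖ ≤ (1 / (c * z).re) ^ (n + 1 : ℝ) * Real.Gamma (n + 1) := by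
  have h1 := Real.integral_rpow_mul_exp_neg_mul_Ioi (a := n + 1) (by positivity) h
  rw [← h1]
  have hp : 0 < (1 / (c * z).re) ^ (n + 1 : ℝ) * Real.Gamma (n + 1) :=
    mul_pos (by positivity) (Real.Gamma_pos_of_pos (by positivity))
  refine norm_integral_le_of_norm_le (Integrable.of_integral_ne_zero (by rw [h1]; exact hp.ne')) ?_
  filter_upwards [ae_restrict_mem measurableSet_Ioi] with r hr
  have hr : 0 < r := hr
  rw [norm_airyMoment_integrand c z n hr, add_sub_cancel_right, Real.rpow_natCast]
  gcongr
  have : 0 ≤ r ^ 3 := by positivity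
  linarith

lemma tendsto_airyMoment (c p : ℂ) (n : ℕ) (h : 0 < c.re) :
    Filter.Tendsto (fun x : ℝ => airyMoment c n (p + x * 1)) Filter.atTop (nhds 0) := by
  have hre : Filter.Tendsto (fun x : ℝ => (c * (p + x * 1)).re) Filter.atTop Filter.atTop := by
    have : (fun x : ℝ => (c * (p + x * 1)).re) = fun x : ℝ => (c * p).re + c.re * x := by
      funext x; simp; ring
    rw [this]
    exact Filter.tendsto_atTop_add_const_left _ _ (Filter.tendsto_id.const_mul_atTop h)
  have hlim : Filter.Tendsto (fun x : ℝ => (1 / (c * (p + x * 1)).re) ^ (n + 1 : ℝ) *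
      Real.Gamma (n + 1)) Filter.atTop (nhds 0) := by
    have h1 := hre.inv_tendsto_atTop.rpow_const (p := (n + 1 : ℝ)) (Or.inr (by positivity))
    rw [Real.zero_rpow (by positivity)] at h1
    simpa [one_div] using h1.mul_const (Real.Gamma (n + 1))
  refine squeeze_zero_norm' ?_ hlim
  filter_upwards [hre.eventually_gt_atTop 0] with x hx
  exact norm_airyMoment_le c _ n hx

lemma airyMoment_at_zero (c : ℂ) (n : ℕ) :
    airyMoment c n 0 = (((3 : ℝ) ^ ((n + 1 : ℝ) / 3) / 3 * Real.Gamma ((n + 1) / 3) : ℝ) : ℂ) := by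
  have h := _root_.integral_rpow_mul_exp_neg_mul_rpow (p := 3) (q := n) (b := 1 / 3) (by norm_num)
    (by linarith [(Nat.cast_nonneg n : (0 : ℝ) ≤ n)]) (by norm_num)
  have e : ((3 : ℝ) ^ ((n + 1 : ℝ) / 3) / 3 * Real.Gamma ((n + 1) / 3) : ℝ) =
      ∫ r in Set.Ioi (0 : ℝ), r ^ n * Real.exp (-r ^ 3 / 3) := by
    have h3 : (1 / 3 : ℝ) ^ (-((n : ℝ) + 1) / 3) = (3 : ℝ) ^ ((n + 1 : ℝ) / 3) := by
      rw [one_div, Real.inv_rpow (by norm_num), ← Real.rpow_neg (by norm_num)]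
      congr 1; ring
    rw [h3] at h
    rw [div_eq_mul_one_div, ← h]
    refine setIntegral_congr_fun measurableSet_Ioi fun r hr => ?_
    have e3 : r ^ (3 : ℝ) = r ^ 3 := by exact_mod_cast Real.rpow_natCast r 3
    simp only [Real.rpow_natCast, e3]
    congr 2; ring
  rw [e, airyMoment, ← integral_complex_ofReal]
  refine setIntegral_congr_fun measurableSet_Ioi fun r _ => ?_
  simp

/-- The unnormalised integral representation of `Ai`. -/
def airyIntegral (z : ℂ) : ℂ :=
  (1 / 2 + Real.sqrt 3 / 2 * I) * airyMoment (1 / 2 + Real.sqrt 3 / 2 * I) 0 z -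
    (1 / 2 - Real.sqrt 3 / 2 * I) * airyMoment (1 / 2 - Real.sqrt 3 / 2 * I) 0 z

def airyIntegralDeriv (z : ℂ) : ℂ :=
  -(1 / 2 + Real.sqrt 3 / 2 * I) ^ 2 * airyMoment (1 / 2 + Real.sqrt 3 / 2 * I) 1 z +
    (1 / 2 - Real.sqrt 3 / 2 * I) ^ 2 * airyMoment (1 / 2 - Real.sqrt 3 / 2 * I) 1 z

lemma sqrt_three_sq : (Real.sqrt 3 : ℂ) ^ 2 = 3 := by
  rw [← Complex.ofReal_pow, Real.sq_sqrt (by norm_num)]; norm_num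

lemma hasDerivAt_airyIntegral (z : ℂ) : HasDerivAt airyIntegral (airyIntegralDeriv z) z := by
  refine (((hasDerivAt_airyMoment _ 0 z).const_mul _).sub
    ((hasDerivAt_airyMoment _ 0 z).const_mul _)).congr_deriv ?_
  rw [airyIntegralDeriv]; ring

lemma hasDerivAt_airyIntegralDeriv (z : ℂ) :
    HasDerivAt airyIntegralDeriv (z * airyIntegral z) z := by
  refine (((hasDerivAt_airyMoment _ 1 z).const_mul _).add
    ((hasDerivAt_airyMoment _ 1 z).const_mul _)).congr_deriv ?_
  rw [airyMoment_two, airyMoment_two, airyIntegral]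
  set J := airyMoment (1 / 2 + Real.sqrt 3 / 2 * I) 0 z
  set K := airyMoment (1 / 2 - Real.sqrt 3 / 2 * I) 0 z
  have h1 : ((1 / 2 : ℂ) + Real.sqrt 3 / 2 * I) ^ 3 = -1 := by
    linear_combination (norm := (ring_nf; simp [I_pow_three]))
      (3 / 8 * I ^ 2 + Real.sqrt 3 / 8 * I ^ 3) * sqrt_three_sq
  have h2 : ((1 / 2 : ℂ) - Real.sqrt 3 / 2 * I) ^ 3 = -1 := by
    linear_combination (norm := (ring_nf; simp [I_pow_three]))
      (3 / 8 * I ^ 2 - Real.sqrt 3 / 8 * I ^ 3) * sqrt_three_sq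
  linear_combination (1 - (1 / 2 + Real.sqrt 3 / 2 * I) * z * J) * h1
    - (1 - (1 / 2 - Real.sqrt 3 / 2 * I) * z * K) * h2

lemma IsAiryAi.eq_airyIntegral {Ai : ℂ → ℂ} (hAi : IsAiryAi Ai) :
    airyIntegral = fun z => (I * Real.sqrt 3 * Real.Gamma (1 / 3) * Real.Gamma (2 / 3)) * Ai z
      + 0 * Ai z := by
  have hs : SolvesAiry airyIntegral :=
    .of_hasDerivAt hasDerivAt_airyIntegral hasDerivAt_airyIntegralDeriv
  have hA := IsAiry.solves hAi
  have g1 := (Real.Gamma_pos_of_pos (show (0 : ℝ) < 1 / 3 by norm_num)).ne'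
  have g2 := (Real.Gamma_pos_of_pos (show (0 : ℝ) < 2 / 3 by norm_num)).ne'
  refine hs.eq_of_init (hA.linComb hA _ _) ?_ ?_
  · rw [hAi.2.2.2.1, airyIntegral, airyMoment_at_zero, airyMoment_at_zero]
    have : (3 : ℝ) ^ (((0 : ℕ) + 1 : ℝ) / 3) / 3 = 3 ^ (-(2 : ℝ) / 3) := by
      rw [show (-(2 : ℝ) / 3) = ((0 : ℕ) + 1 : ℝ) / 3 - 1 by norm_num,
        Real.rpow_sub_one (by norm_num)]
    rw [this]
    push_cast
    have g2' : (Real.Gamma (2 / 3) : ℂ) ≠ 0 := by exact_mod_cast g2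
    field_simp
    rw [show ((0 : ℝ) + 1) / 3 = 1 / 3 by norm_num]
    ring
  · rw [hA.deriv_linComb hA, hAi.2.2.2.2, (hasDerivAt_airyIntegral 0).deriv, airyIntegralDeriv,
      airyMoment_at_zero, airyMoment_at_zero]
    have : (3 : ℝ) ^ (((1 : ℕ) + 1 : ℝ) / 3) / 3 = 3 ^ (-(1 : ℝ) / 3) := by
      rw [show (-(1 : ℝ) / 3) = ((1 : ℕ) + 1 : ℝ) / 3 - 1 by norm_num,
        Real.rpow_sub_one (by norm_num)]
    rw [this]
    push_cast
    have g1' : (Real.Gamma (1 / 3) : ℂ) ≠ 0 := by exact_mod_cast g1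
    field_simp
    rw [show ((1 : ℝ) + 1) / 3 = 2 / 3 by norm_num]
    ring

lemma IsAiryAi.tendsto_zero {Ai : ℂ → ℂ} (hAi : IsAiryAi Ai) (p : ℂ) :
    Filter.Tendsto (fun x : ℝ => Ai (p + x * 1)) Filter.atTop (nhds 0) ∧
    Filter.Tendsto (fun x : ℝ => deriv Ai (p + x * 1)) Filter.atTop (nhds 0) := by
  have g1 := (Real.Gamma_pos_of_pos (show (0 : ℝ) < 1 / 3 by norm_num)).ne'
  have g2 := (Real.Gamma_pos_of_pos (show (0 : ℝ) < 2 / 3 by norm_num)).ne'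
  set C : ℂ := I * Real.sqrt 3 * Real.Gamma (1 / 3) * Real.Gamma (2 / 3) with hC
  have hC0 : C ≠ 0 := by rw [one_div] at g1; simp [hC, g1, g2]
  have hA := IsAiry.solves hAi
  have e := hAi.eq_airyIntegral
  have e0 : Ai = fun z => C⁻¹ * airyIntegral z := by
    funext z; rw [e]; field_simp; ring
  have e1 : deriv Ai = fun z => C⁻¹ * airyIntegralDeriv z := by
    funext z; rw [e0]; exact ((hasDerivAt_airyIntegral z).const_mul _).deriv
  have r1 : 0 < ((1 / 2 : ℂ) + Real.sqrt 3 / 2 * I).re := by norm_num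
  have r2 : 0 < ((1 / 2 : ℂ) - Real.sqrt 3 / 2 * I).re := by norm_num
  have t := fun n => tendsto_airyMoment _ p n r1
  have s := fun n => tendsto_airyMoment _ p n r2
  constructor
  · rw [e0]
    simpa [airyIntegral] using (((t 0).const_mul _).sub ((s 0).const_mul _)).const_mul C⁻¹
  · rw [e1]
    simpa only [airyIntegralDeriv, mul_zero, add_zero] using
      (((t 1).const_mul _).add ((s 1).const_mul _)).const_mul C⁻¹

lemma IsAiryAi.exists_wronskian {Ai Bi : ℂ → ℂ} (hAi : IsAiryAi Ai) (hBi : IsAiryBi Bi) :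
    ∃ w : ℝ, 0 < w ∧ ∀ z, Ai z * deriv Bi z - deriv Ai z * Bi z = w := by
  have g1 := Real.Gamma_pos_of_pos (show (0 : ℝ) < 1 / 3 by norm_num)
  have g2 := Real.Gamma_pos_of_pos (show (0 : ℝ) < 2 / 3 by norm_num)
  refine ⟨(3 : ℝ) ^ (-(2 : ℝ) / 3) / Real.Gamma (2 / 3) *
      ((3 : ℝ) ^ ((1 : ℝ) / 6) / Real.Gamma (1 / 3)) -
    -((3 : ℝ) ^ (-(1 : ℝ) / 3)) / Real.Gamma (1 / 3) *
      ((3 : ℝ) ^ (-(1 : ℝ) / 6) / Real.Gamma (2 / 3)), ?_, fun z => ?_⟩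
  · rw [neg_div (Real.Gamma (1 / 3)), neg_mul, sub_neg_eq_add]
    positivity
  · rw [(IsAiry.solves hAi).wronskian_eq (IsAiry.solves hBi), hAi.2.2.2.1, hAi.2.2.2.2,
      hBi.2.2.2.1, hBi.2.2.2.2, ← Complex.ofReal_mul, ← Complex.ofReal_mul, ← Complex.ofReal_sub]

lemma hasDerivAt_re {f : ℝ → ℂ} {f' : ℂ} {t : ℝ} (h : HasDerivAt f f' t) :
    HasDerivAt (fun t => (f t).re) f'.re t :=
  Complex.reCLM.hasFDerivAt.comp_hasDerivAt t h

lemma hasDerivAt_im {f : ℝ → ℂ} {f' : ℂ} {t : ℝ} (h : HasDerivAt f f' t) :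
    HasDerivAt (fun t => (f t).im) f'.im t :=
  Complex.imCLM.hasFDerivAt.comp_hasDerivAt t h

/-- The quantity `Im (u' ū)`. -/
def airyFlux (u : ℂ → ℂ) (z : ℂ) : ℝ :=
  (deriv u z).im * (u z).re - (deriv u z).re * (u z).im

namespace SolvesAiry

variable {u : ℂ → ℂ}

lemma hasDerivAt_flux_horizontal (hu : SolvesAiry u) (p : ℂ) (x : ℝ) :
    HasDerivAt (fun x : ℝ => airyFlux u (p + x * 1)) (p.im * normSq (u (p + x * 1))) x := by
  have h := hu.hasDerivAt_line p 1 x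
  have h' := hu.hasDerivAt_deriv_line p 1 x
  refine (((hasDerivAt_im h').mul (hasDerivAt_re h)).sub
    ((hasDerivAt_re h').mul (hasDerivAt_im h))).congr_deriv ?_
  simp [normSq_apply]
  ring

lemma hasDerivAt_flux_vertical (hu : SolvesAiry u) (p : ℂ) (t : ℝ) :
    HasDerivAt (fun t : ℝ => airyFlux u (p + t * I))
      (p.re * normSq (u (p + t * I)) - normSq (deriv u (p + t * I))) t := by
  have h := hu.hasDerivAt_line p I t
  have h' := hu.hasDerivAt_deriv_line p I t
  refine (((hasDerivAt_im h').mul (hasDerivAt_re h)).sub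
    ((hasDerivAt_re h').mul (hasDerivAt_im h))).congr_deriv ?_
  simp [normSq_apply]
  ring

lemma hasDerivAt_normSq_vertical (hu : SolvesAiry u) (p : ℂ) (t : ℝ) :
    HasDerivAt (fun t : ℝ => normSq (u (p + t * I))) (-2 * airyFlux u (p + t * I)) t := by
  have h := hu.hasDerivAt_line p I t
  simp only [normSq_apply]
  refine (((hasDerivAt_re h).mul (hasDerivAt_re h)).add
    ((hasDerivAt_im h).mul (hasDerivAt_im h))).congr_deriv ?_
  simp [airyFlux]
  ring

/-- Two zeros of a nontrivial solution on the same vertical line lie in the right half-plane. -/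
lemma re_nonneg_of_two_zeros (hu : SolvesAiry u) (hne : ∀ z, u z ≠ 0 ∨ deriv u z ≠ 0) (p : ℂ)
    {a b : ℝ} (hab : a < b) (ha : u (p + a * I) = 0) (hb : u (p + b * I) = 0) : 0 ≤ p.re := by
  by_contra! hp
  have hanti : StrictAnti (fun t : ℝ => airyFlux u (p + t * I)) := by
    refine strictAnti_of_deriv_neg fun t => ?_
    rw [(hu.hasDerivAt_flux_vertical p t).deriv]
    have h1 := normSq_nonneg (u (p + t * I))
    have h2 := normSq_nonneg (deriv u (p + t * I))
    rcases hne (p + t * I) with h | h <;> have := normSq_pos.2 h <;> nlinarith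
  have := hanti hab
  simp [airyFlux, ha, hb] at this

end SolvesAiry

/-- `Im (Ai'/Ai) < 0` in the upper half-plane. -/
lemma IsAiryAi.flux_neg {Ai Bi : ℂ → ℂ} (hAi : IsAiryAi Ai) (hBi : IsAiryBi Bi) {p : ℂ}
    (hp : 0 < p.im) : airyFlux Ai p < 0 := by
  obtain ⟨w, hw, hW⟩ := hAi.exists_wronskian hBi
  have hA := IsAiry.solves hAi
  have hmono : Monotone (fun x : ℝ => airyFlux Ai (p + x * 1)) := by
    refine monotone_of_deriv_nonneg
      (fun x => (hA.hasDerivAt_flux_horizontal p x).differentiableAt) fun x => ?_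
    rw [(hA.hasDerivAt_flux_horizontal p x).deriv]
    exact mul_nonneg hp.le (normSq_nonneg _)
  have hlim : Filter.Tendsto (fun x : ℝ => airyFlux Ai (p + x * 1)) Filter.atTop (nhds 0) := by
    obtain ⟨t0, t1⟩ := hAi.tendsto_zero p
    have r0 := (Complex.continuous_re.tendsto 0).comp t0
    have i0 := (Complex.continuous_im.tendsto 0).comp t0
    have r1 := (Complex.continuous_re.tendsto 0).comp t1
    have i1 := (Complex.continuous_im.tendsto 0).comp t1
    simpa [airyFlux] using (i1.mul r0).sub (r1.mul i0)
  have hle : ∀ x : ℝ, airyFlux Ai (p + x * 1) ≤ 0 := fun x => hmono.ge_of_tendsto hlim x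
  have h0 : airyFlux Ai p = airyFlux Ai (p + (0 : ℝ) * 1) := by simp
  by_contra! hcon
  have hzero : ∀ x : ℝ, 0 ≤ x → airyFlux Ai (p + x * 1) = 0 := fun x hx =>
    le_antisymm (hle x) (hcon.trans (h0 ▸ hmono hx))
  have hA0 : ∀ x : ℝ, 0 < x → Ai (p + x * 1) = 0 := fun x hx => by
    have h1 : (fun x : ℝ => airyFlux Ai (p + x * 1)) =ᶠ[nhds x] fun _ => 0 := by
      filter_upwards [lt_mem_nhds hx] with y hy using hzero y hy.le
    have h2 := (hA.hasDerivAt_flux_horizontal p x).deriv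
    rw [h1.deriv_eq, deriv_const] at h2
    simpa using (mul_eq_zero.1 h2.symm).resolve_left hp.ne'
  have h1 : (fun x : ℝ => Ai (p + x * 1)) =ᶠ[nhds 1] fun _ => 0 := by
    filter_upwards [lt_mem_nhds one_pos] with y hy using hA0 y hy
  have h2 := (hA.hasDerivAt_line p 1 1).deriv
  rw [h1.deriv_eq, deriv_const, one_mul] at h2
  have h3 := hW (p + (1 : ℝ) * 1)
  rw [hA0 1 one_pos, ← h2] at h3
  rw [zero_mul, zero_mul, sub_zero] at h3
  exact hw.ne (by exact_mod_cast h3)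

lemma IsAiryAi.strictMonoOn_normSq {Ai Bi : ℂ → ℂ} (hAi : IsAiryAi Ai) (hBi : IsAiryBi Bi)
    (s : ℝ) : StrictMonoOn (fun t : ℝ => normSq (Ai (s + t * I))) (Set.Ici 0) := by
  have hA := IsAiry.solves hAi
  refine strictMonoOn_of_deriv_pos (convex_Ici 0)
    (fun t _ => (hA.hasDerivAt_normSq_vertical s t).continuousAt.continuousWithinAt) fun t ht => ?_
  rw [interior_Ici] at ht
  have ht : 0 < t := ht
  rw [(hA.hasDerivAt_normSq_vertical s t).deriv]
  have := hAi.flux_neg hBi (p := s + t * I) (by simpa using ht)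
  linarith

lemma IsAiryAi.abs_eq_of_norm_eq {Ai Bi : ℂ → ℂ} (hAi : IsAiryAi Ai) (hBi : IsAiryBi Bi)
    {s a b : ℝ} (h : ‖Ai (s + a * I)‖ = ‖Ai (s + b * I)‖) : |a| = |b| := by
  have habs : ∀ t : ℝ, normSq (Ai (s + |t| * I)) = normSq (Ai (s + t * I)) := fun t => by
    rcases abs_choice t with h | h <;> rw [h]
    have := IsAiry.conj_apply hAi (s + t * I)
    rw [show (starRingEnd ℂ) (s + t * I) = s + (-t : ℝ) * I by simp] at this
    rw [this, normSq_conj]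
  refine (hAi.strictMonoOn_normSq hBi s).injOn (abs_nonneg a) (abs_nonneg b) ?_
  simp only [habs, normSq_eq_norm_sq, h]

/-! ### Rotational symmetry -/

/-- The primitive cube root of unity in the upper half-plane. -/
def omega : ℂ := -1 / 2 + Real.sqrt 3 / 2 * I

lemma omega_cube : omega ^ 3 = 1 := by
  rw [omega]
  linear_combination (norm := (ring_nf; simp [I_pow_three]))
    (-3 / 8 * I ^ 2 + Real.sqrt 3 / 8 * I ^ 3) * sqrt_three_sq

lemma omega_sq : omega ^ 2 = -1 / 2 - Real.sqrt 3 / 2 * I := by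
  rw [omega]
  linear_combination (norm := (ring_nf; simp)) (1 / 4 * I ^ 2) * sqrt_three_sq

lemma three_rpow_connection : Real.sqrt 3 * (3 : ℝ) ^ (-(2 : ℝ) / 3) = 3 ^ (-(1 : ℝ) / 6) ∧
    Real.sqrt 3 * (3 : ℝ) ^ (-(1 : ℝ) / 3) = 3 ^ ((1 : ℝ) / 6) := by
  rw [Real.sqrt_eq_rpow, ← Real.rpow_add (by norm_num), ← Real.rpow_add (by norm_num)]
  constructor <;> norm_num

lemma Uminus_rotate {Ai Bi : ℂ → ℂ} (hAi : IsAiryAi Ai) (hBi : IsAiryBi Bi)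
    (z : ℂ) : Uminus Ai Bi (omega * z) = omega * Uminus Ai Bi z := by
  have hA := IsAiry.solves hAi
  have hB := IsAiry.solves hBi
  have e : Uminus Ai Bi = fun z => -(Real.sqrt 3 : ℂ) * Ai z + 1 * Bi z := by
    funext z; simp [Uminus]
  have hg : SolvesAiry (Uminus Ai Bi) := e ▸ hA.linComb hB _ _
  have h0 : Uminus Ai Bi 0 = 0 := by
    rw [Uminus, hAi.2.2.2.1, hBi.2.2.2.1, ← three_rpow_connection.1]
    push_cast; ring
  have := (hg.rotate omega_cube).eq_of_init (hg.linComb hg omega 0) (by simp [h0])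
    (by rw [hg.deriv_rotate, hg.deriv_linComb hg]; simp)
  simpa using congrFun this z

lemma Uplus_rotate {Ai Bi : ℂ → ℂ} (hAi : IsAiryAi Ai) (hBi : IsAiryBi Bi)
    (z : ℂ) : Uplus Ai Bi (omega * z) = Uplus Ai Bi z := by
  have hA := IsAiry.solves hAi
  have hB := IsAiry.solves hBi
  have e : Uplus Ai Bi = fun z => (Real.sqrt 3 : ℂ) * Ai z + 1 * Bi z := by
    funext z; simp [Uplus]
  have hg : SolvesAiry (Uplus Ai Bi) := e ▸ hA.linComb hB _ _
  have h0 : deriv (Uplus Ai Bi) 0 = 0 := by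
    rw [e, hA.deriv_linComb hB, hAi.2.2.2.2, hBi.2.2.2.2, ← three_rpow_connection.2]
    push_cast; ring
  have := (hg.rotate omega_cube).eq_of_init hg (by simp)
    (by rw [hg.deriv_rotate, mul_zero, h0, mul_zero])
  exact congrFun this z

lemma mul_eq_Uplus_Uminus {Ai Bi : ℂ → ℂ}
    (z : ℂ) :
    Ai z * Bi z = (Uplus Ai Bi z ^ 2 - Uminus Ai Bi z ^ 2) / (4 * Real.sqrt 3) := by
  have : (Real.sqrt 3 : ℂ) ≠ 0 := by simp
  simp only [Uplus, Uminus]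
  field_simp
  ring

lemma airyProduct_rotate {Ai Bi : ℂ → ℂ} (hAi : IsAiryAi Ai) (hBi : IsAiryBi Bi)
    (z : ℂ) : Ai (omega * z) * Bi (omega * z) =
    (Uplus Ai Bi z ^ 2 - omega ^ 2 * Uminus Ai Bi z ^ 2) / (4 * Real.sqrt 3) := by
  rw [mul_eq_Uplus_Uminus, Uplus_rotate hAi hBi, Uminus_rotate hAi hBi]
  ring

/-! ### Behaviour on the real axis -/

lemma IsAiry.apply_ofReal {w : ℂ → ℂ} {w0 w0' : ℝ} (h : IsAiry w w0 w0')
    (x : ℝ) : w x = ((w x).re : ℂ) := by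
  have := h.conj_apply x
  rw [Complex.conj_ofReal] at this
  exact (Complex.conj_eq_iff_re.1 this.symm).symm

lemma IsAiry.deriv_apply_ofReal {w : ℂ → ℂ} {w0 w0' : ℝ} (h : IsAiry w w0 w0')
    (x : ℝ) : deriv w x = ((deriv w x).re : ℂ) := by
  have := h.deriv_conj_apply x
  rw [Complex.conj_ofReal] at this
  exact (Complex.conj_eq_iff_re.1 this.symm).symm

lemma IsAiry.hasDerivAt_real {w : ℂ → ℂ} {w0 w0' : ℝ} (h : IsAiry w w0 w0')
    (x : ℝ) :
    HasDerivAt (fun x : ℝ => (w x).re) (deriv w x).re x :=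
  hasDerivAt_re (h.solves.hasDerivAt (x : ℂ)).comp_ofReal

lemma IsAiry.hasDerivAt_deriv_real {w : ℂ → ℂ} {w0 w0' : ℝ} (h : IsAiry w w0 w0')
    (x : ℝ) :
    HasDerivAt (fun x : ℝ => (deriv w x).re) (x * (w x).re) x :=
  (hasDerivAt_re (h.solves.hasDerivAt_deriv (x : ℂ)).comp_ofReal).congr_deriv (by simp)

/-- Real solutions are bounded on the negative half-line. -/
lemma IsAiry.bounded_neg {w : ℂ → ℂ} {w0 w0' : ℝ} (h : IsAiry w w0 w0') :
    ∃ C, ∀ r : ℝ, 0 ≤ r → ((w (-r : ℝ)).re) ^ 2 ≤ C := by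
  have hv : ∀ r : ℝ, HasDerivAt (fun r : ℝ => (w (-r : ℝ)).re) (-(deriv w (-r : ℝ)).re) r :=
    fun r => ((h.hasDerivAt_real (-r)).comp r (hasDerivAt_neg r)).congr_deriv (by ring)
  have hv' : ∀ r : ℝ, HasDerivAt (fun r : ℝ => (deriv w (-r : ℝ)).re) (r * (w (-r : ℝ)).re) r :=
    fun r => ((h.hasDerivAt_deriv_real (-r)).comp r (hasDerivAt_neg r)).congr_deriv (by ring)
  set v : ℝ → ℝ := fun r => (w (-r : ℝ)).re with hvdef
  set v' : ℝ → ℝ := fun r => (deriv w (-r : ℝ)).re with hvdef'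
  have hE : ∀ r : ℝ, 0 < r →
      HasDerivAt (fun r => v r ^ 2 + v' r ^ 2 / r) (-(v' r ^ 2 / r ^ 2)) r := fun r hr => by
    have h1 : HasDerivAt v (-v' r) r := hv r
    have h2 : HasDerivAt v' (r * v r) r := hv' r
    refine ((h1.pow 2).add ((h2.pow 2).div (hasDerivAt_id r) hr.ne')).congr_deriv ?_
    simp
    field_simp
    ring
  have hanti : AntitoneOn (fun r => v r ^ 2 + v' r ^ 2 / r) (Set.Ici 1) := by
    refine antitoneOn_of_deriv_nonpos (convex_Ici 1)
      (fun r hr => (hE r (one_pos.trans_le hr)).continuousAt.continuousWithinAt)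
      (fun r hr => ?_) (fun r hr => ?_) <;> rw [interior_Ici] at hr
    · exact (hE r (one_pos.trans hr)).differentiableAt.differentiableWithinAt
    · rw [(hE r (one_pos.trans hr)).deriv]
      exact neg_nonpos.2 (by positivity)
  obtain ⟨C, hC⟩ := (isCompact_Icc (a := (0 : ℝ)) (b := 1)).exists_bound_of_continuousOn
    (f := fun r => v r ^ 2) (fun r _ => ((hv r).continuousAt.pow 2).continuousWithinAt)
  refine ⟨max C (v 1 ^ 2 + v' 1 ^ 2 / 1), fun r hr => ?_⟩
  rcases le_total r 1 with h1 | h1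
  · exact (le_abs_self _).trans ((hC r ⟨hr, h1⟩).trans (le_max_left _ _))
  · refine le_trans ?_ ((hanti (Set.mem_Ici.2 le_rfl) h1 h1).trans (le_max_right _ _))
    have : 0 ≤ v' r ^ 2 / r := by positivity
    change v r ^ 2 ≤ v r ^ 2 + v' r ^ 2 / r
    linarith

lemma IsAiry.pos_of_init_pos {w : ℂ → ℂ} {w0 w0' : ℝ} (h : IsAiry w w0 w0')
    (h0 : 0 < w0) (h0' : 0 < w0') {x : ℝ} (hx : 0 ≤ x) :
    0 < (w x).re ∧ 0 < (deriv w x).re := by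
  have i0 : (w (0 : ℝ)).re = w0 := by simp [h.2.2.2.1]
  have i0' : (deriv w (0 : ℝ)).re = w0' := by simp [h.2.2.2.2]
  have hd : ∀ x : ℝ, HasDerivAt (fun x : ℝ => (w x).re * (deriv w x).re)
      ((deriv w x).re ^ 2 + x * (w x).re ^ 2) x := fun x =>
    ((h.hasDerivAt_real x).mul (h.hasDerivAt_deriv_real x)).congr_deriv (by ring)
  have hmono : MonotoneOn (fun x : ℝ => (w x).re * (deriv w x).re) (Set.Ici 0) := by
    refine monotoneOn_of_deriv_nonneg (convex_Ici 0)
      (fun x _ => (hd x).continuousAt.continuousWithinAt)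
      (fun x _ => (hd x).differentiableAt.differentiableWithinAt) (fun x hx => ?_)
    rw [interior_Ici] at hx
    have hx : 0 < x := hx
    rw [(hd x).deriv]
    positivity
  have hprod : ∀ x : ℝ, 0 ≤ x → 0 < (w x).re * (deriv w x).re := fun x hx => by
    have := hmono (Set.mem_Ici.2 le_rfl) hx hx
    simp only [i0, i0'] at this
    exact (mul_pos h0 h0').trans_le this
  have hw : 0 < (w x).re := by
    by_contra! hneg
    obtain ⟨y, hy, hy0⟩ := intermediate_value_Icc' (f := fun x : ℝ => (w x).re) hx
      (fun y _ => (h.hasDerivAt_real y).continuousAt.continuousWithinAt)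
      ⟨hneg, by rw [i0]; exact h0.le⟩
    have := hprod y hy.1
    simp only at hy0
    rw [hy0, zero_mul] at this
    exact this.false
  exact ⟨hw, (mul_pos_iff_of_pos_left hw).1 (hprod x hx)⟩

/-- `Ai · Bi` is nonnegative and bounded on the positive half-line. -/
lemma airyProduct_pos_axis {Ai Bi : ℂ → ℂ} (hAi : IsAiryAi Ai) (hBi : IsAiryBi Bi) :
    ∃ C, ∀ x : ℝ, 0 ≤ x →
    0 ≤ (Ai x).re * (Bi x).re ∧ (Ai x).re * (Bi x).re ≤ C := by
  obtain ⟨W, hW, hWr⟩ := hAi.exists_wronskian hBi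
  have hA : IsAiry Ai _ _ := hAi
  have hB : IsAiry Bi _ _ := hBi
  set a : ℝ → ℝ := fun x => (Ai x).re with ha
  set a' : ℝ → ℝ := fun x => (deriv Ai x).re with ha'
  set b : ℝ → ℝ := fun x => (Bi x).re with hb
  set b' : ℝ → ℝ := fun x => (deriv Bi x).re with hb'
  have da : ∀ x, HasDerivAt a (a' x) x := hA.hasDerivAt_real
  have da' : ∀ x, HasDerivAt a' (x * a x) x := hA.hasDerivAt_deriv_real
  have db : ∀ x, HasDerivAt b (b' x) x := hB.hasDerivAt_real
  have db' : ∀ x, HasDerivAt b' (x * b x) x := hB.hasDerivAt_deriv_real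
  have hwr : ∀ x, a x * b' x - a' x * b x = W := fun x => by
    have := hWr x
    rw [hA.apply_ofReal, hA.deriv_apply_ofReal, hB.apply_ofReal, hB.deriv_apply_ofReal] at this
    exact_mod_cast this
  have g1 := Real.Gamma_pos_of_pos (show (0 : ℝ) < 1 / 3 by norm_num)
  have g2 := Real.Gamma_pos_of_pos (show (0 : ℝ) < 2 / 3 by norm_num)
  have hbpos : ∀ x, 0 ≤ x → 0 < b x ∧ 0 < b' x := fun x hx =>
    hB.pos_of_init_pos (by positivity) (by positivity) hx
  have hbmono : MonotoneOn b (Set.Ici 0) :=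
    monotoneOn_of_deriv_nonneg (convex_Ici 0) (fun x _ => (db x).continuousAt.continuousWithinAt)
      (fun x _ => (db x).differentiableAt.differentiableWithinAt) (fun x hx => by
        rw [interior_Ici] at hx
        rw [(db x).deriv]; exact (hbpos x (le_of_lt hx)).2.le)
  obtain ⟨t0, t1⟩ := hAi.tendsto_zero 0
  have ta : Filter.Tendsto a Filter.atTop (nhds 0) := by
    simpa [ha, Function.comp_def] using (Complex.continuous_re.tendsto 0).comp t0
  have ta' : Filter.Tendsto a' Filter.atTop (nhds 0) := by
    simpa [ha', Function.comp_def] using (Complex.continuous_re.tendsto 0).comp t1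
  have dq : ∀ x, 0 ≤ x → HasDerivAt (fun x => a x / b x) (-W / b x ^ 2) x := fun x hx =>
    ((da x).div (db x) (hbpos x hx).1.ne').congr_deriv (by rw [← hwr x]; ring)
  have hq : AntitoneOn (fun x => a x / b x) (Set.Ici 0) :=
    antitoneOn_of_deriv_nonpos (convex_Ici 0)
      (fun x hx => (dq x hx).continuousAt.continuousWithinAt)
      (fun x hx => (dq x (interior_subset hx)).differentiableAt.differentiableWithinAt)
      (fun x hx => by
        rw [(dq x (interior_subset hx)).deriv]
        exact div_nonpos_of_nonpos_of_nonneg (by linarith) (by positivity))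
  have tq : Filter.Tendsto (fun x => a x / b x) Filter.atTop (nhds 0) := by
    have hlim : Filter.Tendsto (fun x => |a x| / b 0) Filter.atTop (nhds 0) := by
      simpa using ta.abs.div_const (b 0)
    refine squeeze_zero_norm' ?_ hlim
    filter_upwards [Filter.eventually_ge_atTop 0] with x hx
    rw [Real.norm_eq_abs, abs_div, abs_of_pos (hbpos x hx).1]
    have := hbmono (Set.mem_Ici.2 le_rfl) hx hx
    have := (hbpos 0 le_rfl).1
    gcongr
  have hapos : ∀ x, 0 ≤ x → 0 ≤ a x := fun x hx => by
    have : 0 ≤ a x / b x := le_of_tendsto tq (by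
      filter_upwards [Filter.eventually_ge_atTop x] with y hy
      exact hq hx (Set.mem_Ici.2 (le_trans hx hy)) hy)
    have hb0 := (hbpos x hx).1
    have h2 := mul_nonneg this hb0.le
    rwa [div_mul_cancel₀ _ hb0.ne'] at h2
  have hamono' : MonotoneOn a' (Set.Ici 0) :=
    monotoneOn_of_deriv_nonneg (convex_Ici 0) (fun x _ => (da' x).continuousAt.continuousWithinAt)
      (fun x _ => (da' x).differentiableAt.differentiableWithinAt) (fun x hx => by
        rw [interior_Ici] at hx
        rw [(da' x).deriv]; exact mul_nonneg (le_of_lt hx) (hapos x (le_of_lt hx)))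
  have haneg : ∀ x, 0 ≤ x → a' x ≤ 0 := fun x hx => ge_of_tendsto ta' (by
    filter_upwards [Filter.eventually_ge_atTop x] with y hy
    exact hamono' hx (Set.mem_Ici.2 (le_trans hx hy)) hy)
  have haanti : AntitoneOn a (Set.Ici 0) :=
    antitoneOn_of_deriv_nonpos (convex_Ici 0) (fun x _ => (da x).continuousAt.continuousWithinAt)
      (fun x _ => (da x).differentiableAt.differentiableWithinAt) (fun x hx => by
        rw [(da x).deriv]; exact haneg x (interior_subset hx))
  have dy : ∀ x, HasDerivAt (fun x => (b' x - b x) * Real.exp x)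
      ((x - 1) * b x * Real.exp x) x := fun x =>
    (((db' x).sub (db x)).mul (Real.hasDerivAt_exp x)).congr_deriv (by
      simp only [Pi.sub_apply]; ring)
  have hy : MonotoneOn (fun x => (b' x - b x) * Real.exp x) (Set.Ici 1) :=
    monotoneOn_of_deriv_nonneg (convex_Ici 1) (fun x _ => (dy x).continuousAt.continuousWithinAt)
      (fun x _ => (dy x).differentiableAt.differentiableWithinAt) (fun x hx => by
        have hx : 1 ≤ x := interior_subset hx
        rw [(dy x).deriv]
        have := (hbpos x (by linarith)).1
        exact mul_nonneg (mul_nonneg (by linarith) this.le) (Real.exp_pos x).le)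
  refine ⟨max (a 0 * b 1) (W + a 0 * |b' 1 - b 1|), fun x hx => ⟨mul_nonneg (hapos x hx)
    (hbpos x hx).1.le, ?_⟩⟩
  change a x * b x ≤ _
  have ha0 := haanti (Set.mem_Ici.2 le_rfl) hx hx
  rcases le_total x 1 with h1 | h1
  · exact le_max_of_le_left (mul_le_mul ha0
      (hbmono hx (Set.mem_Ici.2 zero_le_one) h1) (hbpos x hx).1.le (hapos 0 le_rfl))
  · refine le_max_of_le_right ?_
    have h2 := hy (Set.mem_Ici.2 le_rfl) h1 h1
    simp only at h2
    have h3 : -|b' 1 - b 1| ≤ b' x - b x := by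
      have e1 : Real.exp 1 ≤ Real.exp x := Real.exp_le_exp.2 h1
      have e0 := Real.exp_pos 1
      have h4 := neg_abs_le (b' 1 - b 1)
      have h5 := abs_nonneg (b' 1 - b 1)
      by_contra! hcon
      nlinarith [mul_le_mul_of_nonneg_right h4 e0.le, mul_lt_mul_of_pos_right hcon
        (Real.exp_pos x), mul_le_mul_of_nonneg_left e1 h5]
    have h4 := hwr x
    have h5 := mul_nonneg (neg_nonneg.2 (haneg x hx)) (hbpos x hx).1.le
    have h6 := mul_le_mul_of_nonneg_left h3 (hapos x hx)
    have h7 := mul_le_mul_of_nonneg_right ha0 (abs_nonneg (b' 1 - b 1))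
    nlinarith

/-- The values of `Ai · Bi` on the ray `arg z = π/3`. -/
lemma airyProduct_ray {Ai Bi : ℂ → ℂ} (hAi : IsAiryAi Ai) (hBi : IsAiryBi Bi)
    (r : ℝ) : ∃ X Y : ℝ, Uplus Ai Bi (-r : ℝ) = X ∧ Uminus Ai Bi (-r : ℝ) = Y ∧
    (Ai (omega * (omega * (-r : ℝ))) * Bi (omega * (omega * (-r : ℝ)))).re =
      (X ^ 2 + Y ^ 2 / 2) / (4 * Real.sqrt 3) ∧
    (Ai (omega * (omega * (-r : ℝ))) * Bi (omega * (omega * (-r : ℝ)))).im =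
      -(Y ^ 2 / 8) := by
  have hX : Uplus Ai Bi (-r : ℝ) =
      ((Real.sqrt 3 * (Ai (-r : ℝ)).re + (Bi (-r : ℝ)).re : ℝ) : ℂ) := by
    rw [Uplus, IsAiry.apply_ofReal hAi, IsAiry.apply_ofReal hBi]; push_cast; simp
  have hY : Uminus Ai Bi (-r : ℝ) =
      ((-Real.sqrt 3 * (Ai (-r : ℝ)).re + (Bi (-r : ℝ)).re : ℝ) : ℂ) := by
    rw [Uminus, IsAiry.apply_ofReal hAi, IsAiry.apply_ofReal hBi]; push_cast; simp
  refine ⟨_, _, hX, hY, ?_⟩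
  rw [airyProduct_rotate hAi hBi, Uplus_rotate hAi hBi, Uminus_rotate hAi hBi, hX, hY]
  set X : ℝ := Real.sqrt 3 * (Ai (-r : ℝ)).re + (Bi (-r : ℝ)).re
  set Y : ℝ := -Real.sqrt 3 * (Ai (-r : ℝ)).re + (Bi (-r : ℝ)).re
  have h3 : (Real.sqrt 3 : ℝ) ≠ 0 := by simp
  have : ((X : ℂ) ^ 2 - omega ^ 2 * (omega * Y) ^ 2) / (4 * Real.sqrt 3) =
      (((X ^ 2 + Y ^ 2 / 2) / (4 * Real.sqrt 3) : ℝ) : ℂ) + ((-(Y ^ 2 / 8) : ℝ) : ℂ) * I := by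
    have h3' : (Real.sqrt 3 : ℂ) ≠ 0 := by exact_mod_cast h3
    have e : omega ^ 2 * (omega * Y) ^ 2 = omega * (Y : ℂ) ^ 2 := by
      linear_combination (omega * (Y : ℂ) ^ 2) * omega_cube
    rw [e, omega]
    push_cast
    field_simp
    ring
  rw [this]
  constructor
  · simp [-ofReal_div, -ofReal_mul, -ofReal_add, -ofReal_pow, -ofReal_neg]
  · simp [-ofReal_div, -ofReal_mul, -ofReal_add, -ofReal_pow, -ofReal_neg]

/-! ### The product `Ai · Bi` in the sector `0 < arg z < π/3` -/

/-- The open sector `0 < arg z < π/3`. -/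
def airySector : Set ℂ := {z | 0 < z.im ∧ z.im < Real.sqrt 3 * z.re}

lemma isOpen_airySector : IsOpen airySector :=
  (isOpen_lt continuous_const continuous_im).inter
    (isOpen_lt continuous_im (continuous_const.mul continuous_re))

lemma convex_airySector : Convex ℝ airySector := by
  intro x hx y hy a b ha hb hab
  obtain ⟨x1, x2⟩ := hx
  obtain ⟨y1, y2⟩ := hy
  rcases ha.eq_or_lt with rfl | ha
  · obtain rfl : b = 1 := by linarith
    rw [zero_smul, one_smul, zero_add]
    exact ⟨y1, y2⟩
  · constructor
    · simp only [add_im, real_smul, im_ofReal_mul]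
      positivity
    · simp only [add_im, add_re, real_smul, re_ofReal_mul, im_ofReal_mul]
      nlinarith [mul_lt_mul_of_pos_left x2 ha, mul_le_mul_of_nonneg_left y2.le hb]

lemma exists_exp_eq_of_mem_airySector {z : ℂ} (hz : z ∈ airySector) :
    ∃ ζ : ℂ, 0 < ζ.im ∧ ζ.im < π / 3 ∧ Complex.exp ζ = z := by
  obtain ⟨h1, h2⟩ := hz
  have h3 : 0 < Real.sqrt 3 := by simp
  have hre : 0 < z.re := by
    by_contra! h
    nlinarith
  have hz0 : z ≠ 0 := by rintro rfl; simp at h1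
  refine ⟨Complex.log z, ?_, ?_, Complex.exp_log hz0⟩
  · rw [Complex.log_im]
    refine lt_of_le_of_ne (Complex.arg_nonneg_iff.2 h1.le) fun h => ?_
    exact h1.ne' (Complex.arg_eq_zero_iff.1 h.symm).2
  · rw [Complex.log_im, Complex.arg_of_re_nonneg hre.le]
    rw [Real.arcsin_lt_iff_lt_sin' ⟨by linarith [Real.pi_pos], by linarith [Real.pi_pos]⟩,
      Real.sin_pi_div_three, div_lt_iff₀ (norm_pos_iff.2 hz0)]
    have hsq : z.im ^ 2 < 3 * z.re ^ 2 := by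
      have := mul_lt_mul'' h2 h2 h1.le h1.le
      nlinarith [Real.sq_sqrt (show (0 : ℝ) ≤ 3 by norm_num)]
    refine lt_of_pow_lt_pow_left₀ 2 (by positivity) ?_
    rw [mul_pow, Complex.sq_norm, normSq_apply, div_pow, Real.sq_sqrt (by norm_num)]
    nlinarith

/-- A Phragmén–Lindelöf principle in the sector `0 ≤ arg z ≤ π/3`. -/
lemma norm_le_of_bound_on_rays {f : ℂ → ℂ} (hf : Differentiable ℂ f) {K C : ℝ}
    (hgrowth : ∀ ζ : ℂ, 0 < ζ.im → ζ.im < π / 3 →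
      ‖f (Complex.exp ζ)‖ ≤ K * Real.exp (2 * (‖Complex.exp ζ‖ * (1 + ‖Complex.exp ζ‖))))
    (hreal : ∀ x : ℝ, 0 ≤ x → ‖f x‖ ≤ C)
    (hray : ∀ r : ℝ, 0 ≤ r → ‖f (omega * (omega * (-r : ℝ)))‖ ≤ C)
    {ζ : ℂ} (h0 : 0 ≤ ζ.im) (h1 : ζ.im ≤ π / 3) : ‖f (Complex.exp ζ)‖ ≤ C := by
  refine PhragmenLindelof.horizontal_strip (f := fun ζ => f (Complex.exp ζ)) (a := 0) (b := π / 3)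
    (hf.comp Complex.differentiable_exp).diffContOnCl ?_ ?_ ?_ h0 h1
  · refine ⟨2, ?_, 4, ?_⟩
    · rw [sub_zero, div_div_eq_mul_div, mul_div_cancel_left₀ _ Real.pi_ne_zero]
      norm_num
    · refine Asymptotics.IsBigO.of_bound |K| ?_
      refine Filter.eventually_inf_principal.2 (Filter.Eventually.of_forall fun z hz => ?_)
      refine (hgrowth z hz.1 hz.2).trans ?_
      rw [Real.norm_eq_abs, abs_of_pos (Real.exp_pos _)]
      refine mul_le_mul (le_abs_self K) (Real.exp_le_exp.2 ?_) (Real.exp_pos _).le (abs_nonneg K)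
      rw [Complex.norm_exp, two_mul |z.re|, Real.exp_add]
      have e1 : Real.exp z.re ≤ Real.exp |z.re| := Real.exp_le_exp.2 (le_abs_self _)
      have e2 : 1 ≤ Real.exp |z.re| := Real.one_le_exp (abs_nonneg _)
      have e3 := Real.exp_pos z.re
      nlinarith
  · intro z hz
    have : Complex.exp z = (Real.exp z.re : ℂ) := by
      rw [← Complex.re_add_im z, hz]; simp
    change ‖f (Complex.exp z)‖ ≤ C
    rw [this]
    exact hreal _ (Real.exp_pos _).le
  · intro z hz
    have : Complex.exp z = omega * (omega * (-Real.exp z.re : ℝ)) := by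
      rw [← mul_assoc, ← pow_two, omega_sq, ← Complex.re_add_im z, hz, Complex.exp_add,
        Complex.exp_mul_I, ← Complex.ofReal_cos, ← Complex.ofReal_sin, Real.cos_pi_div_three,
        Real.sin_pi_div_three]
      push_cast
      simp
      ring
    change ‖f (Complex.exp z)‖ ≤ C
    rw [this]
    exact hray _ (Real.exp_pos _).le

/-- `Ai · Bi` is bounded in the sector `0 < arg z < π/3`. -/
lemma airyProduct_bounded {Ai Bi : ℂ → ℂ} (hAi : IsAiryAi Ai) (hBi : IsAiryBi Bi) :
    ∃ C, ∀ ζ : ℂ, 0 ≤ ζ.im → ζ.im ≤ π / 3 →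
    ‖Ai (Complex.exp ζ) * Bi (Complex.exp ζ)‖ ≤ C := by
  have hA := IsAiry.solves hAi
  have hB := IsAiry.solves hBi
  obtain ⟨C₁, hC₁⟩ := airyProduct_pos_axis hAi hBi
  obtain ⟨P, hP⟩ := IsAiry.bounded_neg hAi
  obtain ⟨Q, hQ⟩ := IsAiry.bounded_neg hBi
  have h3 : 1 ≤ Real.sqrt 3 := Real.one_le_sqrt.2 (by norm_num)
  refine ⟨max C₁ (12 * P + 4 * Q), fun ζ h0 h1 => ?_⟩
  refine norm_le_of_bound_on_rays (f := fun z => Ai z * Bi z) (hA.diff.mul hB.diff)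
    (K := ‖(Ai 0, deriv Ai 0)‖ * ‖(Bi 0, deriv Bi 0)‖) (fun ζ _ _ => ?_) (fun x hx => ?_)
    (fun r hr => ?_) h0 h1
  · rw [norm_mul]
    refine (mul_le_mul (hA.norm_le _) (hB.norm_le _) (norm_nonneg _) (by positivity)).trans
      (le_of_eq ?_)
    rw [two_mul (_ * _), Real.exp_add]
    ring
  · obtain ⟨p0, p1⟩ := hC₁ x hx
    rw [IsAiry.apply_ofReal hAi, IsAiry.apply_ofReal hBi, ← ofReal_mul, Complex.norm_real,
      Real.norm_eq_abs, abs_of_nonneg p0]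
    exact p1.trans (le_max_left _ _)
  · refine le_trans ?_ (le_max_right _ _)
    obtain ⟨X, Y, hX, hY, e1, e2⟩ := airyProduct_ray hAi hBi r
    refine (Complex.norm_le_abs_re_add_abs_im _).trans ?_
    rw [e1, e2, abs_of_nonneg (by positivity), abs_neg, abs_of_nonneg (by positivity)]
    rw [Uplus, IsAiry.apply_ofReal hAi, IsAiry.apply_ofReal hBi] at hX
    rw [Uminus, IsAiry.apply_ofReal hAi, IsAiry.apply_ofReal hBi] at hY
    have hX : Real.sqrt 3 * (Ai (-r : ℝ)).re + (Bi (-r : ℝ)).re = X := by exact_mod_cast hX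
    have hY : -Real.sqrt 3 * (Ai (-r : ℝ)).re + (Bi (-r : ℝ)).re = Y := by exact_mod_cast hY
    have k1 := hP r hr
    have k2 := hQ r hr
    have hs := Real.sq_sqrt (show (0 : ℝ) ≤ 3 by norm_num)
    set a := (Ai (-r : ℝ)).re
    set b := (Bi (-r : ℝ)).re
    have k3 : X ^ 2 + Y ^ 2 = 6 * a ^ 2 + 2 * b ^ 2 := by
      rw [← hX, ← hY]; linear_combination (2 * a ^ 2) * hs
    have k4 : (X ^ 2 + Y ^ 2 / 2) / (4 * Real.sqrt 3) ≤ X ^ 2 + Y ^ 2 / 2 :=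
      div_le_self (by positivity) (by linarith)
    nlinarith [sq_nonneg X, sq_nonneg Y]

/-- In the sector, `re (c · Ai · Bi)` is nonpositive as soon as it is so on the two bounding
rays. -/
lemma re_mul_airyProduct_nonpos {Ai Bi : ℂ → ℂ} (hAi : IsAiryAi Ai) (hBi : IsAiryBi Bi)
    (c : ℂ) (hreal : ∀ x : ℝ, 0 ≤ x → (c * (Ai x * Bi x)).re ≤ 0)
    (hray : ∀ r : ℝ, 0 ≤ r →
      (c * (Ai (omega * (omega * (-r : ℝ))) * Bi (omega * (omega * (-r : ℝ))))).re ≤ 0)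
    {z : ℂ} (hz : z ∈ airySector) : (c * (Ai z * Bi z)).re ≤ 0 := by
  obtain ⟨C, hC⟩ := airyProduct_bounded hAi hBi
  obtain ⟨ζ, h0, h1, rfl⟩ := exists_exp_eq_of_mem_airySector hz
  have := norm_le_of_bound_on_rays (f := fun z => Complex.exp (c * (Ai z * Bi z)))
    (K := Real.exp (‖c‖ * C)) (C := 1)
    (((hAi.solves.diff.mul hBi.solves.diff).const_mul c).cexp) (fun ζ k0 k1 => ?_)
    (fun x hx => ?_) (fun r hr => ?_) h0.le h1.le
  · rw [Complex.norm_exp] at this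
    exact Real.exp_le_one_iff.1 this
  · rw [Complex.norm_exp]
    refine le_trans ?_ (le_mul_of_one_le_right (Real.exp_pos _).le
      (Real.one_le_exp (by positivity)))
    refine Real.exp_le_exp.2 ((Complex.re_le_norm _).trans ?_)
    rw [norm_mul]
    exact mul_le_mul_of_nonneg_left (hC ζ k0.le k1.le) (norm_nonneg _)
  · rw [Complex.norm_exp]
    exact Real.exp_le_one_iff.2 (hreal x hx)
  · rw [Complex.norm_exp]
    exact Real.exp_le_one_iff.2 (hray r hr)

lemma airyProduct_re_nonneg {Ai Bi : ℂ → ℂ} (hAi : IsAiryAi Ai) (hBi : IsAiryBi Bi)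
    {z : ℂ} (hz : z ∈ airySector) : 0 ≤ (Ai z * Bi z).re := by
  obtain ⟨C, hC⟩ := airyProduct_pos_axis hAi hBi
  have := re_mul_airyProduct_nonpos hAi hBi (-1) (fun x hx => ?_) (fun r _ => ?_) hz
  · simpa using this
  · rw [IsAiry.apply_ofReal hAi, IsAiry.apply_ofReal hBi, ← ofReal_mul]
    simpa using (hC x hx).1
  · obtain ⟨X, Y, -, -, e, -⟩ := airyProduct_ray hAi hBi r
    rw [neg_one_mul, neg_re, e]
    exact neg_nonpos.2 (by positivity)

lemma airyProduct_im_nonpos {Ai Bi : ℂ → ℂ} (hAi : IsAiryAi Ai) (hBi : IsAiryBi Bi)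
    {z : ℂ} (hz : z ∈ airySector) : (Ai z * Bi z).im ≤ 0 := by
  have key : ∀ z : ℂ, (-I * z).re = z.im := fun z => by simp
  have := re_mul_airyProduct_nonpos hAi hBi (-I) (fun x hx => ?_) (fun r _ => ?_) hz
  · rwa [key] at this
  · rw [key, IsAiry.apply_ofReal hAi, IsAiry.apply_ofReal hBi, ← ofReal_mul, ofReal_im]
  · obtain ⟨X, Y, -, -, -, e⟩ := airyProduct_ray hAi hBi r
    rw [key, e]
    exact neg_nonpos.2 (by positivity)

/-- `Ai · Bi` maps the sector `0 < arg z < π/3` into the open lower half-plane. -/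
lemma airyProduct_im_neg {Ai Bi : ℂ → ℂ} (hAi : IsAiryAi Ai) (hBi : IsAiryBi Bi)
    {z : ℂ} (hz : z ∈ airySector) : (Ai z * Bi z).im < 0 := by
  refine lt_of_le_of_ne (airyProduct_im_nonpos hAi hBi hz) fun h0 => ?_
  have hA := IsAiry.solves hAi
  have hB := IsAiry.solves hBi
  set f : ℂ → ℂ := fun z => Complex.exp (-I * (Ai z * Bi z)) with hf
  have hfd : Differentiable ℂ f := ((hA.diff.mul hB.diff).const_mul (-I)).cexp
  have hnorm : ∀ z, ‖f z‖ = Real.exp (Ai z * Bi z).im := fun z => by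
    simp only [hf, Complex.norm_exp]
    congr 1
    simp
  have hmax : IsMaxOn (norm ∘ f) airySector z := fun y hy => by
    simp only [Set.mem_ofPred_eq, Function.comp_apply, hnorm]
    exact Real.exp_le_exp.2 (h0 ▸ airyProduct_im_nonpos hAi hBi hy)
  have hconst := Complex.eqOn_of_isPreconnected_of_isMaxOn_norm
    convex_airySector.isPreconnected isOpen_airySector hfd.differentiableOn hz hmax
  have hall : f = fun _ => f z :=
    AnalyticOnNhd.eq_of_eventuallyEq (z₀ := z) (fun w _ => hfd.analyticAt w)
      (fun w _ => analyticAt_const)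
      (Filter.eventually_of_mem (isOpen_airySector.mem_nhds hz) fun y hy => hconst hy)
  have hd : ∀ y, HasDerivAt (fun z => Ai z * Bi z) (deriv Ai y * Bi y + Ai y * deriv Bi y) y :=
    fun y => (hA.hasDerivAt y).mul (hB.hasDerivAt y)
  have hzero : ∀ y, deriv Ai y * Bi y + Ai y * deriv Bi y = 0 := fun y => by
    have h1 : HasDerivAt f (Complex.exp (-I * (Ai y * Bi y)) *
      (-I * (deriv Ai y * Bi y + Ai y * deriv Bi y))) y := ((hd y).const_mul (-I)).cexp
    rw [hall] at h1
    simpa using h1.unique (hasDerivAt_const y (f z))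
  have h2 := ((hA.hasDerivAt_deriv 0).mul (hB.hasDerivAt 0)).add
    ((hA.hasDerivAt 0).mul (hB.hasDerivAt_deriv 0))
  have h3 := h2.unique ((hasDerivAt_const (0 : ℂ) (0 : ℂ)).congr_of_eventuallyEq
    (Filter.Eventually.of_forall hzero))
  have g1 := Real.Gamma_pos_of_pos (show (0 : ℝ) < 1 / 3 by norm_num)
  have hA0 : deriv Ai 0 ≠ 0 := by
    rw [hAi.2.2.2.2, ofReal_ne_zero]
    exact div_ne_zero (neg_ne_zero.2 (by positivity)) g1.ne'
  have hB0 : deriv Bi 0 ≠ 0 := by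
    rw [hBi.2.2.2.2, ofReal_ne_zero]
    positivity
  have h4 : 2 * (deriv Ai 0 * deriv Bi 0) = 0 := by linear_combination h3
  simp [hA0, hB0] at h4

/-! ### Double zeros of the characteristic function -/

/-- The rotated point `omega * conj z` of a point above the ray `arg z = π/3`. -/
lemma omega_mul_mem_airySector {s t : ℝ} (hs : 0 ≤ s) (ht : 0 < t) (h : Real.sqrt 3 * s < t) :
    omega * (s - t * I) ∈ airySector := by
  have h3 := Real.sq_sqrt (show (0 : ℝ) ≤ 3 by norm_num)
  have h0 : 0 < Real.sqrt 3 := by simp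
  have e : omega * (s - t * I) = (((-s + Real.sqrt 3 * t) / 2 : ℝ) : ℂ)
      + (((Real.sqrt 3 * s + t) / 2 : ℝ) : ℂ) * I := by
    rw [omega]
    push_cast
    linear_combination (-(Real.sqrt 3 : ℂ) * t / 2) * I_sq
  rw [e]
  constructor
  · simp only [add_im, ofReal_im, mul_im, ofReal_re, I_im, I_re]
    nlinarith [mul_nonneg h0.le hs]
  · simp only [add_im, add_re, mul_re, ofReal_im, mul_im, ofReal_re, I_im, I_re]
    nlinarith

lemma hasDerivAt_airyW {Ai Bi : ℂ → ℂ} (hAi : IsAiryAi Ai) (hBi : IsAiryBi Bi)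
    (ε : ℝ) (lam : ℂ) (m : ℂ) (hm : m = (ε ^ ((1 : ℝ) / 3) : ℝ)) :
    HasDerivAt (airyW Ai Bi ε)
      (m * (deriv Ai (m * (lam + I)) * Bi (m * (lam - I))
        + Ai (m * (lam + I)) * deriv Bi (m * (lam - I))
        - (deriv Ai (m * (lam - I)) * Bi (m * (lam + I))
        + Ai (m * (lam - I)) * deriv Bi (m * (lam + I))))) lam := by
  have hA := IsAiry.solves hAi
  have hB := IsAiry.solves hBi
  have lp : HasDerivAt (fun l : ℂ => m * (l + I)) m lam := by
    simpa using ((hasDerivAt_id lam).add_const I).const_mul m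
  have lm : HasDerivAt (fun l : ℂ => m * (l - I)) m lam := by
    simpa using ((hasDerivAt_id lam).sub_const I).const_mul m
  have e : airyW Ai Bi ε = fun l => Ai (m * (l + I)) * Bi (m * (l - I))
      - Ai (m * (l - I)) * Bi (m * (l + I)) := by
    funext l; rw [airyW, hm]
  rw [e]
  have ap := (hA.hasDerivAt (m * (lam + I))).comp lam lp
  have am := (hA.hasDerivAt (m * (lam - I))).comp lam lm
  have bp := (hB.hasDerivAt (m * (lam + I))).comp lam lp
  have bm := (hB.hasDerivAt (m * (lam - I))).comp lam lm
  refine ((ap.mul bm).sub (am.mul bp)).congr_deriv ?_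
  simp only [Function.comp_apply]
  ring

lemma iteratedDeriv_two_airyW {Ai Bi : ℂ → ℂ} (hAi : IsAiryAi Ai) (hBi : IsAiryBi Bi)
    (ε : ℝ) (lam : ℂ) (m : ℂ) (hm : m = (ε ^ ((1 : ℝ) / 3) : ℝ)) :
    iteratedDeriv 2 (airyW Ai Bi ε) lam =
      m ^ 2 * (2 * m * lam * airyW Ai Bi ε lam +
        2 * (deriv Ai (m * (lam + I)) * deriv Bi (m * (lam - I))
          - deriv Ai (m * (lam - I)) * deriv Bi (m * (lam + I)))) := by
  have hA := IsAiry.solves hAi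
  have hB := IsAiry.solves hBi
  have lp : HasDerivAt (fun l : ℂ => m * (l + I)) m lam := by
    simpa using ((hasDerivAt_id lam).add_const I).const_mul m
  have lm : HasDerivAt (fun l : ℂ => m * (l - I)) m lam := by
    simpa using ((hasDerivAt_id lam).sub_const I).const_mul m
  have ap := (hA.hasDerivAt (m * (lam + I))).comp lam lp
  have am := (hA.hasDerivAt (m * (lam - I))).comp lam lm
  have bp := (hB.hasDerivAt (m * (lam + I))).comp lam lp
  have bm := (hB.hasDerivAt (m * (lam - I))).comp lam lm
  have ap' := (hA.hasDerivAt_deriv (m * (lam + I))).comp lam lp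
  have am' := (hA.hasDerivAt_deriv (m * (lam - I))).comp lam lm
  have bp' := (hB.hasDerivAt_deriv (m * (lam + I))).comp lam lp
  have bm' := (hB.hasDerivAt_deriv (m * (lam - I))).comp lam lm
  rw [iteratedDeriv_succ, iteratedDeriv_one,
    funext fun l => (hasDerivAt_airyW hAi hBi ε l m hm).deriv]
  have key := (((ap'.mul bm).add (ap.mul bm')).sub ((am'.mul bp).add (am.mul bp'))).const_mul m
  refine key.deriv.trans ?_
  simp only [Function.comp_apply]
  rw [airyW, ← hm]
  ring

/-- At a point where the two Dirichlet data and their derivatives degenerate simultaneously,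
the values of `(Ai, Bi)` at the two endpoints agree up to sign. -/
lemma exists_sign_of_double_zero {Ai Bi : ℂ → ℂ} (hAi : IsAiryAi Ai) (hBi : IsAiryBi Bi)
    {p q : ℂ} (h : Ai p * Bi q - Ai q * Bi p = 0)
    (h' : deriv Ai p * Bi q + Ai p * deriv Bi q - (deriv Ai q * Bi p + Ai q * deriv Bi p) = 0) :
    ∃ k : ℝ, (k = 1 ∨ k = -1) ∧ Ai p = k * Ai q ∧ Bi p = k * Bi q := by
  obtain ⟨w, hw, hW⟩ := hAi.exists_wronskian hBi
  have hw0 : (w : ℂ) ≠ 0 := ofReal_ne_zero.2 hw.ne'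
  have hp := hW p
  have hq := hW q
  have e1 : Ai p * w = (Ai p * deriv Bi q - Bi p * deriv Ai q) * Ai q := by
    linear_combination (-Ai p) * hq - (deriv Ai q) * h
  have e2 : Bi p * w = (Ai p * deriv Bi q - Bi p * deriv Ai q) * Bi q := by
    linear_combination (-Bi p) * hq - (deriv Bi q) * h
  obtain ⟨k, hk⟩ : ∃ k : ℂ, k = (Ai p * deriv Bi q - Bi p * deriv Ai q) / w := ⟨_, rfl⟩
  have f1 : Ai p = k * Ai q := by rw [hk]; field_simp; exact e1
  have f2 : Bi p = k * Bi q := by rw [hk]; field_simp; exact e2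
  have hk2 : k ^ 2 = 1 := by
    have hkw : k * w = Ai p * deriv Bi q - Bi p * deriv Ai q := by rw [hk]; field_simp
    have : k ^ 2 * w = 1 * w := by
      linear_combination k * hkw + k * h' + hp - (deriv Bi p) * f1 + (deriv Ai p) * f2
    exact mul_right_cancel₀ hw0 this
  rcases mul_self_eq_one_iff.1 ((pow_two k).symm.trans hk2) with h1 | h1
  · exact ⟨1, Or.inl rfl, by simpa [h1] using f1, by simpa [h1] using f2⟩
  · exact ⟨-1, Or.inr rfl, by simpa [h1] using f1, by simpa [h1] using f2⟩

/-- A nontrivial solution vanishing at `z` and `conj z`, `z` non-real, forces `0 ≤ re z`. -/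
lemma re_nonneg_of_conj_zeros {Ai Bi : ℂ → ℂ} (hAi : IsAiryAi Ai) (hBi : IsAiryBi Bi)
    {s t : ℝ} (ht : 0 < t)
    (h : Ai (s + t * I) * Bi (s - t * I) - Ai (s - t * I) * Bi (s + t * I) = 0) : 0 ≤ s := by
  obtain ⟨w, hw, hW⟩ := hAi.exists_wronskian hBi
  have hw0 : (w : ℂ) ≠ 0 := ofReal_ne_zero.2 hw.ne'
  have hA := IsAiry.solves hAi
  have hB := IsAiry.solves hBi
  set q : ℂ := s - t * I with hq
  have hu := hA.linComb hB (Bi q) (-Ai q)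
  have hd := hA.deriv_linComb hB (Bi q) (-Ai q)
  have hne : ∀ z, (Bi q * Ai z + -Ai q * Bi z) ≠ 0 ∨
      deriv (fun z => Bi q * Ai z + -Ai q * Bi z) z ≠ 0 := fun z => by
    by_contra! hcon
    obtain ⟨c1, c2⟩ := hcon
    rw [hd] at c2
    have k1 : Ai q * w = 0 := by
      linear_combination (-Ai q) * hW z + (deriv Ai z) * c1 - Ai z * c2
    have k2 : Bi q * w = 0 := by
      linear_combination (-Bi q) * hW z + (deriv Bi z) * c1 - Bi z * c2
    have k1 := (mul_eq_zero.1 k1).resolve_right hw0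
    have k2 := (mul_eq_zero.1 k2).resolve_right hw0
    exact hw0 (by rw [← hW q, k1, k2]; ring)
  have := hu.re_nonneg_of_two_zeros hne s (a := -t) (b := t) (by linarith)
    (by
      rw [show (s : ℂ) + ((-t : ℝ) : ℂ) * I = q by rw [hq]; push_cast; ring]
      ring)
    (by linear_combination h)
  simpa using this

lemma normSq_Uplus_add_pos {Ai Bi : ℂ → ℂ} (hAi : IsAiryAi Ai) (hBi : IsAiryBi Bi)
    {z : ℂ} :
    0 < normSq (Uplus Ai Bi z) + normSq (Uminus Ai Bi z) := by
  obtain ⟨w, hw, hW⟩ := hAi.exists_wronskian hBi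
  by_contra! hcon
  have h1 := normSq_nonneg (Uplus Ai Bi z)
  have h2 := normSq_nonneg (Uminus Ai Bi z)
  have k1 : Uplus Ai Bi z = 0 := normSq_eq_zero.1 (by linarith)
  have k2 : Uminus Ai Bi z = 0 := normSq_eq_zero.1 (by linarith)
  simp only [Uplus, Uminus] at k1 k2
  have b0 : Bi z = 0 := by linear_combination (k1 + k2) / 2
  have a0 : Ai z = 0 := by simpa [b0] using k1
  have := hW z
  rw [a0, b0] at this
  exact hw.ne' (by simpa using this.symm)

/-- If `(Ai, Bi)` agree up to a common sign at `z` and `conj z`, then `z` is a zero of `Uminus` on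
the ray `arg z = π/3`. -/
lemma ray_of_conj_proportional {Ai Bi : ℂ → ℂ} (hAi : IsAiryAi Ai) (hBi : IsAiryBi Bi)
    {s t k : ℝ} (hs : 0 ≤ s) (ht : 0 < t) (hk : k = 1 ∨ k = -1)
    (hA : Ai (s + t * I) = k * Ai (s - t * I)) (hB : Bi (s + t * I) = k * Bi (s - t * I)) :
    t = Real.sqrt 3 * s ∧ Uminus Ai Bi (s + t * I) = 0 := by
  have hconj : (starRingEnd ℂ) (s - t * I) = s + t * I := by simp
  have cA : Ai (s + t * I) = (starRingEnd ℂ) (Ai (s - t * I)) := by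
    rw [← hconj, IsAiry.conj_apply hAi]
  have cB : Bi (s + t * I) = (starRingEnd ℂ) (Bi (s - t * I)) := by
    rw [← hconj, IsAiry.conj_apply hBi]
  set q : ℂ := s - t * I with hq
  have hk1 : (k : ℂ) * k = 1 := by rcases hk with rfl | rfl <;> simp
  have sqP : Uplus Ai Bi q ^ 2 = k * normSq (Uplus Ai Bi q) := by
    have : (starRingEnd ℂ) (Uplus Ai Bi q) = k * Uplus Ai Bi q := by
      simp only [Uplus, map_add, map_mul, conj_ofReal, ← cA, ← cB]
      rw [hA, hB]; ring
    rw [normSq_eq_conj_mul_self, this]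
    linear_combination (-Uplus Ai Bi q ^ 2) * hk1
  have sqM : Uminus Ai Bi q ^ 2 = k * normSq (Uminus Ai Bi q) := by
    have : (starRingEnd ℂ) (Uminus Ai Bi q) = k * Uminus Ai Bi q := by
      simp only [Uminus, map_add, map_mul, map_neg, conj_ofReal, ← cA, ← cB]
      rw [hA, hB]; ring
    rw [normSq_eq_conj_mul_self, this]
    linear_combination (-Uminus Ai Bi q ^ 2) * hk1
  have h3 : 0 < Real.sqrt 3 := by simp
  have h3c : (Real.sqrt 3 : ℂ) ≠ 0 := by simp
  set P := normSq (Uplus Ai Bi q)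
  set M := normSq (Uminus Ai Bi q) with hM
  have hpos : 0 < P + M := normSq_Uplus_add_pos hAi hBi
  have hP0 : 0 ≤ P := normSq_nonneg _
  have hM0 : 0 ≤ M := normSq_nonneg _
  have hrot : Ai (omega * q) * Bi (omega * q) =
      ((k * (P + M / 2) / (4 * Real.sqrt 3) : ℝ) : ℂ) + ((k * M / 8 : ℝ) : ℂ) * I := by
    rw [airyProduct_rotate hAi hBi, sqP, sqM, omega_sq]
    push_cast
    field_simp
    ring
  have hprod : (Ai (s + t * I) * Bi (s + t * I)).im = 0 := by
    have : Ai (s + t * I) * Bi (s + t * I) = ((k * (P - M) / (4 * Real.sqrt 3) : ℝ) : ℂ) := by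
      rw [hA, hB]
      have e : Ai q * Bi q = (k * P - k * M) / (4 * Real.sqrt 3) := by
        rw [← sqP, ← sqM]; exact mul_eq_Uplus_Uminus q
      push_cast
      linear_combination (k * k : ℂ) * e + ((k * P - k * M) / (4 * Real.sqrt 3) : ℂ) * hk1
    rw [this, ofReal_im]
  have hre : (Ai (omega * q) * Bi (omega * q)).re = k * (P + M / 2) / (4 * Real.sqrt 3) := by
    rw [hrot]; simp [-ofReal_div, -ofReal_mul, -ofReal_add]
  have him : (Ai (omega * q) * Bi (omega * q)).im = k * M / 8 := by
    rw [hrot]; simp [-ofReal_div, -ofReal_mul, -ofReal_add]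
  have hts : t = Real.sqrt 3 * s := by
    rcases lt_trichotomy t (Real.sqrt 3 * s) with hlt | heq | hgt
    · have hz : (s + t * I : ℂ) ∈ airySector := by
        constructor <;> simpa
      exact absurd hprod (airyProduct_im_neg hAi hBi hz).ne
    · exact heq
    · have hz := omega_mul_mem_airySector hs ht hgt
      rcases hk with rfl | rfl
      · have := airyProduct_im_neg hAi hBi hz
        rw [him] at this
        linarith
      · have := airyProduct_re_nonneg hAi hBi hz
        rw [hre, le_div_iff₀ (by positivity)] at this
        linarith
  refine ⟨hts, ?_⟩
  have hz : omega * q = s + t * I := by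
    rw [hq, hts, omega]
    push_cast
    linear_combination (-(Real.sqrt 3 : ℂ) ^ 2 * s / 2) * I_sq + (s / 2 : ℂ) * sqrt_three_sq
  rw [hz, hprod] at him
  have hM1 : M = 0 := by rcases hk with rfl | rfl <;> linarith
  rw [← hz, Uminus_rotate hAi hBi, normSq_eq_zero.1 hM1, mul_zero]

/-- On the ray `arg z = π/3`, zeros of `Uminus` are points where `Ai` and `Bi` take the same
values as at the complex conjugate. -/
lemma eq_conj_of_Uminus_eq_zero {Ai Bi : ℂ → ℂ} (hAi : IsAiryAi Ai) (hBi : IsAiryBi Bi)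
    {s t : ℝ} (hts : t = Real.sqrt 3 * s)
    (hU : Uminus Ai Bi (s + t * I) = 0) :
    Ai (s + t * I) = Ai (s - t * I) ∧ Bi (s + t * I) = Bi (s - t * I) := by
  have hz : omega * (s - t * I) = s + t * I := by
    rw [hts, omega]
    push_cast
    linear_combination (-(Real.sqrt 3 : ℂ) ^ 2 * s / 2) * I_sq + (s / 2 : ℂ) * sqrt_three_sq
  have h0 : omega ≠ 0 := fun h => by have := omega_cube; rw [h] at this; norm_num at this
  have hP := Uplus_rotate hAi hBi (s - t * I)
  have hMq := Uminus_rotate hAi hBi (s - t * I)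
  rw [hz] at hP hMq
  rw [hU] at hMq
  have hMq := (mul_eq_zero.1 hMq.symm).resolve_left h0
  have h3 : (Real.sqrt 3 : ℂ) ≠ 0 := by simp
  simp only [Uplus, Uminus] at hP hMq hU
  constructor
  · refine mul_left_cancel₀ h3 ?_
    linear_combination (hP - hU + hMq) / 2
  · linear_combination (hP + hU - hMq) / 2

/-- The derivatives of `(Ai, Bi)` at conjugate points with equal real values of `Ai` and `Bi`
are not proportional. -/
lemma deriv_cross_ne_zero {Ai Bi : ℂ → ℂ} (hAi : IsAiryAi Ai) (hBi : IsAiryBi Bi)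
    {s t : ℝ} (ht : 0 < t) (hA : Ai (s + t * I) = Ai (s - t * I))
    (hB : Bi (s + t * I) = Bi (s - t * I)) :
    deriv Ai (s + t * I) * deriv Bi (s - t * I)
      - deriv Ai (s - t * I) * deriv Bi (s + t * I) ≠ 0 := by
  intro h
  obtain ⟨w, hw, hW⟩ := hAi.exists_wronskian hBi
  have hw0 : (w : ℂ) ≠ 0 := ofReal_ne_zero.2 hw.ne'
  have hp := hW (s + t * I)
  have hq := hW (s - t * I)
  have hconj : (starRingEnd ℂ) (s - t * I) = s + t * I := by simp
  have cA : Ai (s + t * I) = (starRingEnd ℂ) (Ai (s - t * I)) := by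
    rw [← hconj, IsAiry.conj_apply hAi]
  have cA' : deriv Ai (s + t * I) = (starRingEnd ℂ) (deriv Ai (s - t * I)) := by
    rw [← hconj, IsAiry.deriv_conj_apply hAi]
  rw [← hA, ← hB] at hq
  have e : deriv Ai (s + t * I) = deriv Ai (s - t * I) := by
    refine mul_right_cancel₀ hw0 ?_
    linear_combination (-deriv Ai (s + t * I)) * hq + (deriv Ai (s - t * I)) * hp
      + Ai (s + t * I) * h
  have f := hAi.flux_neg hBi (p := s + t * I) (by simpa using ht)
  have i1 : (Ai (s + t * I)).im = 0 := conj_eq_iff_im.1 (by rw [← hA] at cA; exact cA.symm)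
  have i2 : (deriv Ai (s + t * I)).im = 0 := conj_eq_iff_im.1 (by rw [← e] at cA'; exact cA'.symm)
  rw [airyFlux, i1, i2] at f
  simp at f

lemma ofReal_mul_exp_pi_div_three (r : ℝ) : (r : ℂ) * Complex.exp ((π / 3 : ℝ) * I) =
    ((r / 2 : ℝ) : ℂ) + ((Real.sqrt 3 * (r / 2) : ℝ) : ℂ) * I := by
  rw [Complex.exp_mul_I, ← Complex.ofReal_cos, ← Complex.ofReal_sin, Real.cos_pi_div_three,
    Real.sin_pi_div_three]
  push_cast
  ring

lemma rpow_third_eq_iff {ε m : ℝ} (hε : 0 < ε) (hm : 0 < m) :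
    ε ^ ((1 : ℝ) / 3) = m ↔ ε = m ^ 3 := by
  constructor
  · rintro rfl
    rw [← Real.rpow_natCast, ← Real.rpow_mul hε.le]
    norm_num
  · rintro rfl
    rw [← Real.rpow_natCast, ← Real.rpow_mul hm.le]
    norm_num

/-- The multiple eigenvalues of the model family occur exactly at the critical parameter
values `ε_k = (√3·α_k/2)³` (where `(α k)` enumerates, increasingly, the moduli of the zeros
of `U₋` on the ray `arg z = π/3`, indexed from `0`), always at the knot point `λ = 1/√3`,
and always with algebraic multiplicity exactly `2`. -/
theorem critical_points_of_spectral_locus (Ai Bi : ℂ → ℂ)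
    (hAi : IsAiryAi Ai) (hBi : IsAiryBi Bi)
    (α : ℕ → ℝ) (hmono : StrictMono α)
    (hrange : Set.range α = rayZeroModuli (Uminus Ai Bi)) :
    (∀ ε : ℝ, 0 < ε → ∀ lam : ℂ,
      (airyW Ai Bi ε lam = 0 ∧ deriv (airyW Ai Bi ε) lam = 0) ↔
      (lam = 1 / (Real.sqrt 3 : ℂ) ∧ ∃ k : ℕ, ε = (Real.sqrt 3 * α k / 2) ^ 3)) ∧
    (∀ k : ℕ,
      iteratedDeriv 2 (airyW Ai Bi ((Real.sqrt 3 * α k / 2) ^ 3))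
        (1 / (Real.sqrt 3 : ℂ)) ≠ 0) := by
  have hα : ∀ k, 0 < α k ∧ Uminus Ai Bi (((α k / 2 : ℝ) : ℂ)
      + ((Real.sqrt 3 * (α k / 2) : ℝ) : ℂ) * I) = 0 := fun k => by
    have : α k ∈ rayZeroModuli (Uminus Ai Bi) := hrange ▸ Set.mem_range_self k
    rw [← ofReal_mul_exp_pi_div_three]
    exact this
  have h3 : 0 < Real.sqrt 3 := by simp
  have h3c : (Real.sqrt 3 : ℂ) ≠ 0 := by simp
  have hpts : ∀ r : ℝ, ((Real.sqrt 3 * r / 2 : ℝ) : ℂ) * (1 / Real.sqrt 3 + I) =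
        ((r / 2 : ℝ) : ℂ) + ((Real.sqrt 3 * (r / 2) : ℝ) : ℂ) * I ∧
      ((Real.sqrt 3 * r / 2 : ℝ) : ℂ) * (1 / Real.sqrt 3 - I) =
        ((r / 2 : ℝ) : ℂ) - ((Real.sqrt 3 * (r / 2) : ℝ) : ℂ) * I := fun r => by
    push_cast
    constructor <;> field_simp
  have hval : ∀ k, airyW Ai Bi ((Real.sqrt 3 * α k / 2) ^ 3) (1 / Real.sqrt 3) = 0 ∧
      deriv (airyW Ai Bi ((Real.sqrt 3 * α k / 2) ^ 3)) (1 / Real.sqrt 3) = 0 ∧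
      iteratedDeriv 2 (airyW Ai Bi ((Real.sqrt 3 * α k / 2) ^ 3)) (1 / Real.sqrt 3) ≠ 0 :=
    fun k => by
    obtain ⟨hpos, hU⟩ := hα k
    have hm : 0 < Real.sqrt 3 * α k / 2 := by positivity
    have hμ : ((Real.sqrt 3 * α k / 2) ^ 3) ^ ((1 : ℝ) / 3) = Real.sqrt 3 * α k / 2 :=
      (rpow_third_eq_iff (by positivity) hm).2 rfl
    obtain ⟨eA, eB⟩ := eq_conj_of_Uminus_eq_zero hAi hBi rfl hU
    obtain ⟨w, -, hW⟩ := hAi.exists_wronskian hBi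
    have hW0 : airyW Ai Bi ((Real.sqrt 3 * α k / 2) ^ 3) (1 / Real.sqrt 3) = 0 := by
      rw [airyW, hμ, (hpts _).1, (hpts _).2, eA, eB, sub_self]
    refine ⟨hW0, ?_, ?_⟩
    · rw [(hasDerivAt_airyW hAi hBi _ _ _ rfl).deriv, hμ, (hpts _).1, (hpts _).2]
      have hp := hW (((α k / 2 : ℝ) : ℂ) + ((Real.sqrt 3 * (α k / 2) : ℝ) : ℂ) * I)
      have hq := hW (((α k / 2 : ℝ) : ℂ) - ((Real.sqrt 3 * (α k / 2) : ℝ) : ℂ) * I)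
      rw [eA, eB] at hp ⊢
      linear_combination ((Real.sqrt 3 * α k / 2 : ℝ) : ℂ) * (hq - hp)
    · rw [iteratedDeriv_two_airyW hAi hBi _ _ _ rfl, hW0, hμ, (hpts _).1, (hpts _).2, mul_zero,
        zero_add]
      exact mul_ne_zero (pow_ne_zero 2 (ofReal_ne_zero.2 hm.ne')) (mul_ne_zero two_ne_zero
        (deriv_cross_ne_zero hAi hBi (by positivity) eA eB))
  refine ⟨fun ε hε lam => ⟨fun ⟨h0, h1⟩ => ?_, ?_⟩, fun k => (hval k).2.2⟩
  · obtain ⟨m, hm⟩ : ∃ m, m = ε ^ ((1 : ℝ) / 3) := ⟨_, rfl⟩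
    have hm0 : 0 < m := hm ▸ Real.rpow_pos_of_pos hε _
    have hmc : (m : ℂ) ≠ 0 := ofReal_ne_zero.2 hm0.ne'
    rw [(hasDerivAt_airyW hAi hBi ε lam m (by rw [hm])).deriv] at h1
    rw [airyW, ← hm] at h0
    obtain ⟨k, hk, eA, eB⟩ := exists_sign_of_double_zero hAi hBi h0
      ((mul_eq_zero.1 h1).resolve_left hmc)
    have hsplit : ∀ σ : ℝ, (m : ℂ) * (lam + σ * I) =
        ((m * lam.re : ℝ) : ℂ) + ((m * (lam.im + σ) : ℝ) : ℂ) * I := fun σ => by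
      conv_lhs => rw [← Complex.re_add_im lam]
      push_cast
      ring
    have hpl := hsplit 1
    have hmi := hsplit (-1)
    rw [ofReal_one, one_mul] at hpl
    rw [ofReal_neg, ofReal_one, neg_one_mul, ← sub_eq_add_neg] at hmi
    have him : lam.im = 0 := by
      have hn : ‖Ai (m * (lam + I))‖ = ‖Ai (m * (lam - I))‖ := by
        rw [eA, norm_mul]
        rcases hk with rfl | rfl <;> simp
      rw [hpl, hmi] at hn
      have := hAi.abs_eq_of_norm_eq hBi hn
      rw [abs_mul, abs_mul] at this
      have := mul_left_cancel₀ (abs_pos.2 hm0.ne').ne' this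
      have := sq_eq_sq_iff_abs_eq_abs _ _ |>.2 this
      linarith
    rw [him, zero_add, mul_one] at hpl
    rw [him, zero_add, mul_neg_one, ofReal_neg, neg_mul, ← sub_eq_add_neg] at hmi
    rw [hpl, hmi] at eA eB h0
    have hs := re_nonneg_of_conj_zeros hAi hBi hm0 h0
    obtain ⟨hts, hU⟩ := ray_of_conj_proportional hAi hBi hs hm0 hk eA eB
    have hre : lam.re = 1 / Real.sqrt 3 := by
      rw [eq_div_iff h3.ne']
      refine mul_left_cancel₀ hm0.ne' ?_
      linear_combination -hts
    have hmem : 2 * (m * lam.re) ∈ Set.range α := by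
      rw [hrange]
      have hrepos : 0 < lam.re := by rw [hre]; positivity
      refine ⟨by positivity, ?_⟩
      rw [ofReal_mul_exp_pi_div_three, mul_div_cancel_left₀ _ two_ne_zero, ← hts]
      exact hU
    obtain ⟨j, hj⟩ := hmem
    refine ⟨?_, j, ?_⟩
    · apply Complex.ext
      · rw [hre, ← ofReal_one, ← ofReal_div, ofReal_re]
      · rw [him, ← ofReal_one, ← ofReal_div, ofReal_im]
    · rw [hj, show Real.sqrt 3 * (2 * (m * lam.re)) / 2 = m by linear_combination -hts]
      exact (rpow_third_eq_iff hε hm0).1 hm.symm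
  · rintro ⟨rfl, k, rfl⟩
    exact ⟨(hval k).1, (hval k).2.1⟩
end
end

section
/- Let (β_k)_{k≥1} be the increasing enumeration of the moduli of the zeros of U₊ on the open ray arg z = π/3, and set δ_k = (√3·β_k/2)³. Then for every k ≥ 1 the function y(x) = U₊(δ_k^{1/3}·(1/√3 − i·x)) (with δ_k^{1/3} the real cube root) satisfies y(-1) = y(1) = 0, is not identically zero on [-1,1], and satisfies -δ_k^{-1}·y''(x) + i·x·y(x) = (1/√3)·y(x) for all x. In particular, 1/√3 is an eigenvalue of the model operator T(δ_k) with this explicit eigenfunction. -/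
open Complex MeasureTheory Real

noncomputable section

/-- `lam` is an eigenvalue of the model operator `T(ε) y = -ε⁻¹ y'' + i x y`
with Dirichlet boundary conditions on `[-1,1]`. -/
def IsModelEigenvalue (ε : ℝ) (lam : ℂ) : Prop :=
  ∃ y : ℝ → ℂ, ContDiff ℝ 2 y ∧
    (∃ x ∈ Set.Icc (-1 : ℝ) 1, y x ≠ 0) ∧
    (∀ x ∈ Set.Ioo (-1 : ℝ) 1,
      -(ε⁻¹ : ℂ) * deriv (deriv y) x + Complex.I * (x : ℂ) * y x = lam * y x) ∧
    y (-1) = 0 ∧ y 1 = 0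

/-- Higher derivatives of a solution of the Airy equation. -/
theorem iteratedDeriv_airy {w : ℂ → ℂ} (hw : Differentiable ℂ w)
    (hode : ∀ z, deriv (deriv w) z = z * w z) (n : ℕ) :
    ∀ z, iteratedDeriv (n + 2) w z
      = z * iteratedDeriv n w z + n * iteratedDeriv (n - 1) w z := by
  have hd : ∀ m, Differentiable ℂ (iteratedDeriv m w) := fun m =>
    (hw.contDiff (n := ⊤)).differentiable_iteratedDeriv m (by simp)
  induction n with
  | zero => intro z; simp [iteratedDeriv_succ, hode]
  | succ n ih =>
    intro z
    have hder : ∀ m, HasDerivAt (iteratedDeriv m w) (iteratedDeriv (m + 1) w z) z := by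
      intro m
      rw [iteratedDeriv_succ]
      exact (hd m z).hasDerivAt
    have hpred : (n : ℂ) * iteratedDeriv (n - 1 + 1) w z = n * iteratedDeriv n w z := by
      cases n <;> simp
    rw [iteratedDeriv_succ, funext ih,
      (((hasDerivAt_id' z).fun_mul (hder n)).fun_add ((hder (n - 1)).const_mul (n : ℂ))).deriv, hpred]
    push_cast
    ring

/-- An entire solution of the Airy equation with zero data at the origin vanishes. -/
theorem airy_eq_zero {w : ℂ → ℂ} (hw : Differentiable ℂ w)
    (hode : ∀ z, deriv (deriv w) z = z * w z) (h0 : w 0 = 0) (h1 : deriv w 0 = 0) (z : ℂ) :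
    w z = 0 := by
  have hzero : ∀ n, iteratedDeriv n w 0 = 0 := by
    intro n
    induction n using Nat.strong_induction_on with
    | _ n ih =>
      match n with
      | 0 => simpa using h0
      | 1 => simpa using h1
      | m + 2 => simp [iteratedDeriv_airy hw hode m, ih (m - 1) (by omega)]
  have h := Complex.taylorSeries_eq_of_entire hw 0 z
  simpa [hzero] using h.symm

/-- The rescaled function `z ↦ w (p + q z)` has derivative `q w' (p + q z)`. -/
theorem hasDerivAt_comp_affine {w : ℂ → ℂ} (hw : Differentiable ℂ w) (p q z : ℂ) :
    HasDerivAt (fun z => w (p + q * z)) (q * deriv w (p + q * z)) z := by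
  have h : HasDerivAt (fun z => p + q * z) q z := by
    simpa using ((hasDerivAt_id' z).const_mul q).const_add p
  rw [mul_comm q (deriv w _)]
  exact (hw (p + q * z)).hasDerivAt.comp z h

/-- An entire solution of the Airy equation with `w' 0 = 0` is invariant under rotation by
any cube root of unity. -/
theorem airy_rotate {w : ℂ → ℂ} (hw : Differentiable ℂ w) (hw' : Differentiable ℂ (deriv w))
    (hode : ∀ z, deriv (deriv w) z = z * w z) (h1 : deriv w 0 = 0) {ω : ℂ} (hω : ω ^ 3 = 1)
    (z : ℂ) : w (ω * z) = w z := by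
  have hd : ∀ z, HasDerivAt (fun z => w (ω * z) - w z) (ω * deriv w (ω * z) - deriv w z) z :=
    fun z => by simpa using (hasDerivAt_comp_affine hw 0 ω z).fun_sub (hw z).hasDerivAt
  have hd' : ∀ z, HasDerivAt (fun z => ω * deriv w (ω * z) - deriv w z)
      (ω * (ω * deriv (deriv w) (ω * z)) - deriv (deriv w) z) z :=
    fun z => by
      simpa using ((hasDerivAt_comp_affine hw' 0 ω z).const_mul ω).fun_sub (hw' z).hasDerivAt
  have hderiv := funext fun z => (hd z).deriv
  refine sub_eq_zero.mp (airy_eq_zero (w := fun z => w (ω * z) - w z)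
    (fun z => (hd z).differentiableAt) (fun z => ?_) (by simp) ?_ z)
  · rw [hderiv, (hd' z).deriv, hode, hode]
    linear_combination z * w (ω * z) * hω
  · rw [(hd 0).deriv]
    simp [h1]

/-- An entire function vanishing on the real interval `[-1, 1]` vanishes identically. -/
theorem entire_eq_zero_of_Icc {f : ℂ → ℂ} (hf : Differentiable ℂ f)
    (h : ∀ x ∈ Set.Icc (-1 : ℝ) 1, f x = 0) (z : ℂ) : f z = 0 := by
  have ht : Filter.Tendsto (fun x : ℝ => (x : ℂ)) (nhdsWithin 0 (Set.Ioi 0))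
      (nhdsWithin 0 {0}ᶜ) := by
    refine tendsto_nhdsWithin_iff.mpr ⟨?_, ?_⟩
    · simpa using (Complex.continuous_ofReal.tendsto 0).mono_left nhdsWithin_le_nhds
    · filter_upwards [self_mem_nhdsWithin] with x hx
      simpa using (ne_of_gt hx : x ≠ 0)
  have hev : ∀ᶠ x : ℝ in nhdsWithin 0 (Set.Ioi 0), f x = 0 := by
    filter_upwards [Ioo_mem_nhdsGT (zero_lt_one' ℝ)] with x hx
    exact h x ⟨by linarith [hx.1], hx.2.le⟩
  have hfa : AnalyticOnNhd ℂ f Set.univ := fun z _ => hf.analyticAt z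
  have hz : AnalyticOnNhd ℂ (fun _ : ℂ => (0 : ℂ)) Set.univ := analyticOnNhd_const
  exact congrFun (hfa.eq_of_frequently_eq (z₀ := 0) hz (ht.frequently hev.frequently)) z

/-- `U₊` is an entire solution of the Airy equation with `U₊' 0 = 0` and `U₊ 0 ≠ 0`. -/
theorem Uplus_airy {Ai Bi : ℂ → ℂ} (hAi : IsAiryAi Ai) (hBi : IsAiryBi Bi) :
    Differentiable ℂ (Uplus Ai Bi) ∧ Differentiable ℂ (deriv (Uplus Ai Bi)) ∧
    (∀ z, deriv (deriv (Uplus Ai Bi)) z = z * Uplus Ai Bi z) ∧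
    deriv (Uplus Ai Bi) 0 = 0 ∧ Uplus Ai Bi 0 ≠ 0 := by
  obtain ⟨hA, hA', hAode, hA0, hA1⟩ := hAi
  obtain ⟨hB, hB', hBode, hB0, hB1⟩ := hBi
  have hd : ∀ z, HasDerivAt (Uplus Ai Bi) ((Real.sqrt 3 : ℂ) * deriv Ai z + deriv Bi z) z :=
    fun z => ((hA z).hasDerivAt.const_mul _).add (hB z).hasDerivAt
  have hderiv : deriv (Uplus Ai Bi) = fun z => (Real.sqrt 3 : ℂ) * deriv Ai z + deriv Bi z :=
    funext fun z => (hd z).deriv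
  have hd' : ∀ z, HasDerivAt (deriv (Uplus Ai Bi))
      ((Real.sqrt 3 : ℂ) * deriv (deriv Ai) z + deriv (deriv Bi) z) z := fun z => by
    rw [hderiv]
    exact ((hA' z).hasDerivAt.const_mul _).add (hB' z).hasDerivAt
  refine ⟨fun z => (hd z).differentiableAt, fun z => (hd' z).differentiableAt, fun z => ?_,
    ?_, ?_⟩
  · rw [(hd' z).deriv, hAode, hBode, Uplus]
    ring
  · have h : Real.sqrt 3 * (3 : ℝ) ^ (-(1 : ℝ) / 3) = (3 : ℝ) ^ ((1 : ℝ) / 6) := by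
      rw [Real.sqrt_eq_rpow, ← Real.rpow_add (by norm_num)]
      norm_num
    rw [hderiv]
    simp only [hA1, hB1]
    rw [← h]
    push_cast
    ring
  · have hG : 0 < Real.Gamma (2 / 3) := Real.Gamma_pos_of_pos (by norm_num)
    rw [Uplus, hA0, hB0, ← Complex.ofReal_mul, ← Complex.ofReal_add, Complex.ofReal_ne_zero]
    positivity

/-- The ray `arg z = π/3` in Cartesian form. -/
theorem exp_pi_div_three_mul_I :
    Complex.exp ((π / 3 : ℝ) * Complex.I) = (1 + Real.sqrt 3 * Complex.I) / 2 := by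
  rw [Complex.exp_mul_I, ← Complex.ofReal_cos, ← Complex.ofReal_sin, Real.cos_pi_div_three,
    Real.sin_pi_div_three]
  push_cast
  ring

/-- For `δ_k = (√3·β_k/2)³` (where `(β k)` enumerates, increasingly, the moduli of the zeros
of `U₊` on the ray `arg z = π/3`, indexed from `0`), the function
`y(x) = U₊(δ_k^{1/3}(1/√3 − i x))` is an explicit eigenfunction of the model operator
`T(δ_k)` with eigenvalue `1/√3`. -/
theorem explicit_eigenfunction_at_delta (Ai Bi : ℂ → ℂ)
    (hAi : IsAiryAi Ai) (hBi : IsAiryBi Bi)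
    (β : ℕ → ℝ) (hmono : StrictMono β)
    (hrange : Set.range β = rayZeroModuli (Uplus Ai Bi)) (k : ℕ) :
    ∀ δ : ℝ, δ = (Real.sqrt 3 * β k / 2) ^ 3 →
    ∀ y : ℝ → ℂ, y = (fun x : ℝ =>
        Uplus Ai Bi (((δ ^ ((1:ℝ)/3) : ℝ) : ℂ) *
          (1 / (Real.sqrt 3 : ℂ) - Complex.I * (x : ℂ)))) →
      y (-1) = 0 ∧ y 1 = 0 ∧ (∃ x ∈ Set.Icc (-1 : ℝ) 1, y x ≠ 0) ∧
      (∀ x : ℝ, -(δ⁻¹ : ℂ) * deriv (deriv y) x + Complex.I * (x : ℂ) * y x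
        = (1 / (Real.sqrt 3 : ℂ)) * y x) ∧
      IsModelEigenvalue δ (1 / (Real.sqrt 3 : ℂ)) := by
  intro δ hδ y hy
  obtain ⟨hU, hU', hode, hU1, hU0⟩ := Uplus_airy hAi hBi
  obtain ⟨hβ, hzero⟩ : β k ∈ rayZeroModuli (Uplus Ai Bi) := hrange ▸ Set.mem_range_self k
  set U := Uplus Ai Bi
  set b := β k
  have hs : (0 : ℝ) < Real.sqrt 3 := by positivity
  have hsC : (Real.sqrt 3 : ℂ) ≠ 0 := by exact_mod_cast hs.ne'
  have hs2 : (Real.sqrt 3 : ℂ) ^ 2 = 3 := by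
    exact_mod_cast Real.sq_sqrt (show (0 : ℝ) ≤ 3 by norm_num)
  set c : ℝ := Real.sqrt 3 * b / 2 with hc
  have hcpos : 0 < c := by positivity
  have hcC : (c : ℂ) ≠ 0 := by exact_mod_cast hcpos.ne'
  have hroot : δ ^ ((1 : ℝ) / 3) = c := by
    rw [hδ, ← Real.rpow_natCast, ← Real.rpow_mul hcpos.le]
    norm_num
  rw [hroot] at hy
  set p : ℂ := c * (1 / (Real.sqrt 3 : ℂ)) with hp
  set q : ℂ := -(c * Complex.I) with hq
  have hqne : q ≠ 0 := by simp [hq, hcC]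
  have hy' : y = fun x : ℝ => U (p + q * x) := by
    rw [hy]
    funext x
    congr 1
    rw [hp, hq]
    ring
  have hd : deriv y = fun x : ℝ => q * deriv U (p + q * x) := by
    rw [hy']
    exact funext fun x => (hasDerivAt_comp_affine hU p q x).comp_ofReal.deriv
  have hdd : ∀ x, deriv (deriv y) x = q * (q * ((p + q * x) * U (p + q * x))) := by
    intro x
    rw [hd, ((hasDerivAt_comp_affine hU' p q x).const_mul q).comp_ofReal.deriv, hode]
  have hcb : (c : ℂ) = Real.sqrt 3 * b / 2 := by rw [hc]; push_cast; rfl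
  have hpb : p = b / 2 := by
    rw [hp, hcb]
    field_simp
  rw [exp_pi_div_three_mul_I] at hzero
  have hleft : y (-1) = 0 := by
    rw [hy', ← hzero]
    dsimp only
    congr 1
    rw [hpb, hq, hcb]
    push_cast
    ring
  have hright : y 1 = 0 := by
    have hω : ((-1 - Real.sqrt 3 * Complex.I) / 2 : ℂ) ^ 3 = 1 := by
      have hI := Complex.I_sq
      grind
    rw [hy', ← hzero, ← airy_rotate hU hU' hode hU1 hω]
    dsimp only
    congr 1
    rw [hpb, hq, hcb]
    push_cast
    have hI := Complex.I_sq
    grind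
  have hne : ∃ x ∈ Set.Icc (-1 : ℝ) 1, y x ≠ 0 := by
    by_contra! hcon
    have h := entire_eq_zero_of_Icc (f := fun z => U (p + q * z))
      (fun z => (hasDerivAt_comp_affine hU p q z).differentiableAt)
      (fun x hx => by simpa [hy'] using hcon x hx) (-p / q)
    rw [mul_div_cancel₀ _ hqne, add_neg_cancel] at h
    exact hU0 h
  have heq : ∀ x : ℝ, -(δ⁻¹ : ℂ) * deriv (deriv y) x + Complex.I * (x : ℂ) * y x
      = (1 / (Real.sqrt 3 : ℂ)) * y x := by
    intro x
    have hδC : (δ : ℂ) = (c : ℂ) ^ 3 := by rw [hδ]; push_cast; rfl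
    have hq2 : q * q = -(c : ℂ) ^ 2 := by
      rw [hq]
      linear_combination (c : ℂ) ^ 2 * Complex.I_sq
    rw [hdd, hy', hδC, ← mul_assoc q q, hq2]
    dsimp only
    generalize U (p + q * x) = u
    rw [hp, hq]
    field_simp
    ring
  have hsmooth : ContDiff ℝ 2 y := by
    rw [hy']
    exact (hU.contDiff.restrict_scalars ℝ).comp
      (contDiff_const.add (contDiff_const.mul Complex.ofRealCLM.contDiff))
  exact ⟨hleft, hright, hne, heq, y, hsmooth, hne, fun x _ => heq x, hleft, hright⟩
end
end

section
/- Let (α_k)_{k≥1} be the increasing enumeration of the moduli of the zeros of U₋ on the open ray arg z = π/3, and set ε_k = (√3·α_k/2)³. Then ε_k = (√3/4)·(3/2)³·(πk − π/12 + O(1/k))² as k → ∞; equivalently, there is a constant C > 0 such that |√(ε_k/((√3/4)·(3/2)³)) − (πk − π/12)| ≤ C/k for all k ≥ 1. -/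
open Complex MeasureTheory Real

noncomputable section

/-- The Gamma-type weight `e^{-s} s^{-1/6}`. -/
def hankelWeight (s : ℝ) : ℝ := rexp (-s) * s ^ (-(1 / 6) : ℝ)

/-- The complex number `x + i s / 2`. -/
def hankelBase (x s : ℝ) : ℂ := (x : ℂ) + (s / 2 : ℝ) * I

/-- The Hankel-type integral `∫₀^∞ e^{-s} s^{-1/6} (x + i s / 2)^c ds`. -/
def hankelInt (c x : ℝ) : ℂ :=
  ∫ s in Set.Ioi (0 : ℝ), (hankelWeight s : ℂ) * hankelBase x s ^ (c : ℂ)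

lemma hankelWeight_pos {s : ℝ} (hs : 0 < s) : 0 < hankelWeight s := by
  unfold hankelWeight; positivity

lemma integrableOn_hankelWeight : IntegrableOn hankelWeight (Set.Ioi 0) := by
  have h := Real.GammaIntegral_convergent (s := 5 / 6) (by norm_num)
  norm_num at h
  exact h.congr_fun (fun s _ => by unfold hankelWeight; norm_num) measurableSet_Ioi

lemma hankelBase_re (x s : ℝ) : (hankelBase x s).re = x := by simp [hankelBase]

lemma hankelBase_im (x s : ℝ) : (hankelBase x s).im = s / 2 := by simp [hankelBase]

lemma hankelBase_ne_zero {x : ℝ} (hx : 0 < x) (s : ℝ) : hankelBase x s ≠ 0 := by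
  intro h
  have := congrArg Complex.re h
  rw [hankelBase_re] at this
  simp at this; linarith

lemma hankelBase_mem_slitPlane {x : ℝ} (hx : 0 < x) (s : ℝ) :
    hankelBase x s ∈ Complex.slitPlane := by
  left; rwa [hankelBase_re]

lemma le_norm_hankelBase (x s : ℝ) : x ≤ ‖hankelBase x s‖ := by
  have := Complex.re_le_norm (hankelBase x s)
  rwa [hankelBase_re] at this

lemma continuous_hankelBase (x : ℝ) : Continuous (hankelBase x) := by
  unfold hankelBase; fun_prop

lemma norm_hankelBase_cpow_le {x y : ℝ} (hx : 0 < x) (hxy : x ≤ y) {c : ℝ} (hc : c ≤ 0)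
    (s : ℝ) : ‖hankelBase y s ^ (c : ℂ)‖ ≤ x ^ c := by
  rw [Complex.norm_cpow_real]
  exact Real.rpow_le_rpow_of_nonpos hx (hxy.trans (le_norm_hankelBase y s)) hc

lemma continuous_hankelBase_cpow {x : ℝ} (hx : 0 < x) (c : ℝ) :
    Continuous fun s => hankelBase x s ^ (c : ℂ) :=
  (continuous_hankelBase x).cpow continuous_const fun s => hankelBase_mem_slitPlane hx s

lemma aestronglyMeasurable_hankelInt {x : ℝ} (hx : 0 < x) (c : ℝ) :
    AEStronglyMeasurable (fun s => (hankelWeight s : ℂ) * hankelBase x s ^ (c : ℂ))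
      (volume.restrict (Set.Ioi 0)) :=
  (Complex.continuous_ofReal.comp_aestronglyMeasurable
    integrableOn_hankelWeight.aestronglyMeasurable).mul
    (continuous_hankelBase_cpow hx c).aestronglyMeasurable

lemma integrableOn_hankelInt {x : ℝ} (hx : 0 < x) {c : ℝ} (hc : c ≤ 0) :
    IntegrableOn (fun s => (hankelWeight s : ℂ) * hankelBase x s ^ (c : ℂ)) (Set.Ioi 0) := by
  refine Integrable.mono' (integrableOn_hankelWeight.mul_const (x ^ c))
    (aestronglyMeasurable_hankelInt hx c) ?_
  filter_upwards [ae_restrict_mem measurableSet_Ioi] with s hs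
  rw [norm_mul, Complex.norm_real, Real.norm_of_nonneg (hankelWeight_pos hs).le]
  gcongr
  · exact (hankelWeight_pos hs).le
  · exact norm_hankelBase_cpow_le hx le_rfl hc s

lemma hasDerivAt_hankelBase_cpow {x : ℝ} (hx : 0 < x) (c s : ℝ) :
    HasDerivAt (fun y => hankelBase y s ^ (c : ℂ))
      (c * hankelBase x s ^ ((c - 1 : ℝ) : ℂ)) x := by
  have h1 : HasDerivAt (fun y : ℝ => hankelBase y s) 1 x :=
    (Complex.ofRealCLM.hasDerivAt (x := x)).add_const _
  have h2 := ((hasDerivAt_id _).cpow_const (c := (c : ℂ))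
    (hankelBase_mem_slitPlane hx s)).comp x h1
  simpa [Function.comp_def, hankelBase] using h2

lemma hasDerivAt_hankelInt {x : ℝ} (hx : 0 < x) {c : ℝ} (hc : c ≤ 0) :
    HasDerivAt (hankelInt c) (c * hankelInt (c - 1) x) x := by
  have hpos : ∀ y ∈ Metric.ball x (x / 2), x / 2 ≤ y := fun y hy => by
    have := abs_lt.1 (by simpa [Real.dist_eq] using hy : |y - x| < x / 2)
    linarith [this.1]
  have h := hasDerivAt_integral_of_dominated_loc_of_deriv_le (𝕜 := ℝ)
    (μ := volume.restrict (Set.Ioi (0 : ℝ))) (x₀ := x) (s := Metric.ball x (x / 2))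
    (F := fun y s => (hankelWeight s : ℂ) * hankelBase y s ^ (c : ℂ))
    (F' := fun y s => (hankelWeight s : ℂ) * (c * hankelBase y s ^ ((c - 1 : ℝ) : ℂ)))
    (bound := fun s => hankelWeight s * (|c| * (x / 2) ^ (c - 1)))
    (Metric.ball_mem_nhds x (by positivity)) ?_ (integrableOn_hankelInt hx hc) ?_ ?_
    (integrableOn_hankelWeight.mul_const _) ?_
  · refine h.2.congr_deriv ?_
    rw [hankelInt, ← integral_const_mul]
    congr 1; ext s; ring
  · filter_upwards [Metric.ball_mem_nhds x (by positivity : 0 < x / 2)] with y hy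
    exact aestronglyMeasurable_hankelInt (by linarith [hpos y hy]) c
  · have := (aestronglyMeasurable_hankelInt hx (c - 1)).const_mul (c : ℂ)
    refine this.congr (Filter.Eventually.of_forall fun s => ?_)
    ring
  · filter_upwards [ae_restrict_mem measurableSet_Ioi] with s hs y hy
    rw [norm_mul, norm_mul, Complex.norm_real, Complex.norm_real,
      Real.norm_of_nonneg (hankelWeight_pos hs).le, Real.norm_eq_abs]
    gcongr
    · exact (hankelWeight_pos hs).le
    · exact norm_hankelBase_cpow_le (by positivity) (hpos y hy) (by linarith) s
  · refine Filter.Eventually.of_forall fun s y hy => ?_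
    exact (hasDerivAt_hankelBase_cpow (by linarith [hpos y hy]) c s).const_mul _

lemma hankelBase_cpow_succ {x : ℝ} (hx : 0 < x) (c s : ℝ) :
    hankelBase x s ^ ((c + 1 : ℝ) : ℂ) = hankelBase x s * hankelBase x s ^ (c : ℂ) := by
  rw [Complex.ofReal_add, Complex.cpow_add _ _ (hankelBase_ne_zero hx s)]
  simp [mul_comm]

/-- The integral of the total derivative of `e^{-s} s^{5/6} (x + i s / 2)^{-7/6}` vanishes. -/
lemma hankelInt_recurrence {x : ℝ} (hx : 0 < x) :
    2 * I * hankelInt (-1 / 6) x + (-2 * I * x - 1 / 3) * hankelInt (-7 / 6) x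
      + 7 / 6 * x * hankelInt (-13 / 6) x = 0 := by
  have h1 := (integrableOn_hankelInt hx (c := -1 / 6) (by norm_num)).const_mul (2 * I)
  have h2 := (integrableOn_hankelInt hx (c := -7 / 6) (by norm_num)).const_mul
    (-2 * I * x - 1 / 3)
  have h3 := (integrableOn_hankelInt hx (c := -13 / 6) (by norm_num)).const_mul
    (7 / 6 * (x : ℂ))
  have key := integral_Ioi_of_hasDerivAt_of_tendsto (a := (0 : ℝ)) (m := (0 : ℂ))
    (f := fun s => ((rexp (-s) * s ^ (5 / 6 : ℝ) : ℝ) : ℂ) *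
      hankelBase x s ^ ((-7 / 6 : ℝ) : ℂ)) ?_ ?_ ((h1.add h2).add h3) ?_
  · rw [integral_add' (h1.add h2) h3, integral_add' h1 h2, integral_const_mul,
      integral_const_mul, integral_const_mul] at key
    simpa [hankelInt] using key
  · refine Continuous.continuousWithinAt ?_
    refine (Complex.continuous_ofReal.comp ?_).mul (continuous_hankelBase_cpow hx _)
    exact (Real.continuous_exp.comp continuous_neg).mul
      (Real.continuous_rpow_const (by norm_num))
  · intro s hs
    have hs : 0 < s := hs
    have hr : HasDerivAt (fun s : ℝ => rexp (-s) * s ^ (5 / 6 : ℝ))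
        (hankelWeight s * (5 / 6 - s)) s := by
      have ha : HasDerivAt (fun s : ℝ => rexp (-s)) (-rexp (-s)) s := by
        simpa using (hasDerivAt_neg s).exp
      have hb := Real.hasDerivAt_rpow_const (x := s) (p := 5 / 6) (Or.inl hs.ne')
      refine (ha.mul hb).congr_deriv ?_
      have e : s ^ (5 / 6 : ℝ) = s * s ^ (-(1 / 6) : ℝ) := by
        rw [← Real.rpow_one_add' hs.le (by norm_num)]; norm_num
      rw [e, hankelWeight]
      norm_num
      ring
    have hq : HasDerivAt (fun s => hankelBase x s ^ ((-7 / 6 : ℝ) : ℂ))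
        ((-7 / 6 : ℝ) * hankelBase x s ^ ((-13 / 6 : ℝ) : ℂ) * (I / 2)) s := by
      have hb : HasDerivAt (fun s : ℝ => hankelBase x s) (I / 2) s := by
        have := (((hasDerivAt_id s).div_const 2).ofReal_comp.mul_const I).const_add (x : ℂ)
        refine this.congr_deriv ?_
        push_cast; ring
      have := ((hasDerivAt_id _).cpow_const (c := ((-7 / 6 : ℝ) : ℂ))
        (hankelBase_mem_slitPlane hx s)).comp s hb
      refine this.congr_deriv ?_
      norm_num [hankelBase]
    refine (hr.ofReal_comp.mul hq).congr_deriv ?_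
    have e1 : hankelBase x s ^ ((-7 / 6 : ℝ) : ℂ)
        = hankelBase x s * hankelBase x s ^ ((-13 / 6 : ℝ) : ℂ) := by
      rw [← hankelBase_cpow_succ hx]; norm_num
    have e2 : hankelBase x s ^ ((-1 / 6 : ℝ) : ℂ)
        = hankelBase x s * hankelBase x s ^ ((-7 / 6 : ℝ) : ℂ) := by
      rw [← hankelBase_cpow_succ hx]; norm_num
    have e3 : rexp (-s) * s ^ (5 / 6 : ℝ) = hankelWeight s * s := by
      rw [hankelWeight, mul_assoc, ← Real.rpow_add_one' hs.le (by norm_num)]; norm_num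
    simp only [Pi.add_apply]
    rw [e3, e2, e1]
    generalize hankelBase x s ^ ((-13 / 6 : ℝ) : ℂ) = Q
    rw [hankelBase]
    push_cast
    linear_combination (-(hankelWeight s : ℂ) * Q * (I * s^2 / 2 + x * s )) * Complex.I_sq
  · have hlim := (tendsto_rpow_mul_exp_neg_mul_atTop_nhds_zero (5 / 6) 1 one_pos).mul_const
      (x ^ (-7 / 6 : ℝ))
    rw [zero_mul] at hlim
    refine squeeze_zero_norm' ?_ hlim
    filter_upwards [Filter.eventually_gt_atTop 0] with s hs
    rw [norm_mul, Complex.norm_real, Real.norm_of_nonneg (by positivity), mul_comm (rexp _),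
      neg_one_mul]
    gcongr
    exact norm_hankelBase_cpow_le hx le_rfl (by norm_num) s

/-- The modulus of the integrand of `hankelInt (-1 / 6) x`. -/
def hankelAmp (x s : ℝ) : ℝ := hankelWeight s * ‖hankelBase x s‖ ^ (-1 / 6 : ℝ)

lemma hankelBase_ne_zero' (x : ℝ) {s : ℝ} (hs : 0 < s) : hankelBase x s ≠ 0 := by
  intro h
  have := congrArg Complex.im h
  rw [hankelBase_im] at this
  simp at this; linarith

lemma hankelIntegrand_mul_exp (x θ : ℝ) {s : ℝ} (hs : 0 < s) :
    (hankelWeight s : ℂ) * hankelBase x s ^ ((-1 / 6 : ℝ) : ℂ) * Complex.exp (θ * I) =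
      (hankelAmp x s : ℂ) * Complex.exp ((θ - (hankelBase x s).arg / 6 : ℝ) * I) := by
  have hne := hankelBase_ne_zero' x hs
  rw [hankelAmp, Complex.cpow_def_of_ne_zero hne, Complex.log,
    Real.rpow_def_of_pos (norm_pos_iff.2 hne)]
  push_cast
  rw [mul_assoc, mul_assoc, ← Complex.exp_add, ← Complex.exp_add]
  congr 2
  ring

lemma hankelInt_mul_exp (x θ : ℝ) :
    hankelInt (-1 / 6) x * Complex.exp (θ * I) =
      ∫ s in Set.Ioi (0 : ℝ), (hankelAmp x s : ℂ) *
        Complex.exp ((θ - (hankelBase x s).arg / 6 : ℝ) * I) := by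
  rw [hankelInt, ← integral_mul_const]
  exact setIntegral_congr_fun measurableSet_Ioi fun s hs => hankelIntegrand_mul_exp x θ hs

lemma hankelAmp_pos (x : ℝ) {s : ℝ} (hs : 0 < s) : 0 < hankelAmp x s :=
  mul_pos (hankelWeight_pos hs) (Real.rpow_pos_of_pos (norm_pos_iff.2 (hankelBase_ne_zero' x hs)) _)

lemma integrableOn_hankelAmp {x : ℝ} (hx : 0 < x) :
    IntegrableOn (hankelAmp x) (Set.Ioi 0) := by
  have h := (integrableOn_hankelInt hx (c := -1 / 6) (by norm_num)).norm
  refine IntegrableOn.congr_fun h (fun s hs => ?_) measurableSet_Ioi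
  rw [norm_mul, Complex.norm_real, Real.norm_of_nonneg (hankelWeight_pos hs).le,
    Complex.norm_cpow_real, hankelAmp]

lemma integrableOn_hankelAmp_mul_exp {x : ℝ} (hx : 0 < x) (θ : ℝ) :
    IntegrableOn (fun s => (hankelAmp x s : ℂ) *
        Complex.exp ((θ - (hankelBase x s).arg / 6 : ℝ) * I)) (Set.Ioi 0) := by
  have h := (integrableOn_hankelInt hx (c := -1 / 6) (by norm_num)).mul_const
    (Complex.exp (θ * I))
  exact IntegrableOn.congr_fun h (fun s hs => hankelIntegrand_mul_exp x θ hs) measurableSet_Ioi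

lemma hankelInt_mul_exp_re {x : ℝ} (hx : 0 < x) (θ : ℝ) :
    IntegrableOn (fun s => hankelAmp x s * Real.cos (θ - (hankelBase x s).arg / 6))
      (Set.Ioi 0) ∧
    (hankelInt (-1 / 6) x * Complex.exp (θ * I)).re =
      ∫ s in Set.Ioi (0 : ℝ), hankelAmp x s * Real.cos (θ - (hankelBase x s).arg / 6) := by
  have hint := integrableOn_hankelAmp_mul_exp hx θ
  have e : ∀ s, Complex.reCLM ((hankelAmp x s : ℂ) *
      Complex.exp ((θ - (hankelBase x s).arg / 6 : ℝ) * I)) =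
      hankelAmp x s * Real.cos (θ - (hankelBase x s).arg / 6) := fun s => by
    rw [Complex.reCLM_apply, Complex.re_ofReal_mul, Complex.exp_ofReal_mul_I_re]
  constructor
  · simpa only [e, IntegrableOn] using Complex.reCLM.integrable_comp hint
  · rw [hankelInt_mul_exp, ← Complex.reCLM_apply, ← Complex.reCLM.integral_comp_comm hint]
    simp only [e]

lemma hankelInt_mul_exp_im {x : ℝ} (hx : 0 < x) (θ : ℝ) :
    IntegrableOn (fun s => hankelAmp x s * Real.sin (θ - (hankelBase x s).arg / 6))
      (Set.Ioi 0) ∧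
    (hankelInt (-1 / 6) x * Complex.exp (θ * I)).im =
      ∫ s in Set.Ioi (0 : ℝ), hankelAmp x s * Real.sin (θ - (hankelBase x s).arg / 6) := by
  have hint := integrableOn_hankelAmp_mul_exp hx θ
  have e : ∀ s, Complex.imCLM ((hankelAmp x s : ℂ) *
      Complex.exp ((θ - (hankelBase x s).arg / 6 : ℝ) * I)) =
      hankelAmp x s * Real.sin (θ - (hankelBase x s).arg / 6) := fun s => by
    rw [Complex.imCLM_apply, Complex.im_ofReal_mul, Complex.exp_ofReal_mul_I_im]
  constructor
  · simpa only [e, IntegrableOn] using Complex.imCLM.integrable_comp hint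
  · rw [hankelInt_mul_exp, ← Complex.imCLM_apply, ← Complex.imCLM.integral_comp_comm hint]
    simp only [e]

lemma setIntegral_Ioi_pos {f : ℝ → ℝ} (hf : IntegrableOn f (Set.Ioi 0))
    (hpos : ∀ s, 0 < s → 0 < f s) : 0 < ∫ s in Set.Ioi (0 : ℝ), f s := by
  rw [setIntegral_pos_iff_support_of_nonneg_ae _ hf]
  · have : Function.support f ∩ Set.Ioi 0 = Set.Ioi 0 :=
      Set.inter_eq_right.2 fun s hs => (hpos s hs).ne'
    rw [this]; simp
  · filter_upwards [ae_restrict_mem measurableSet_Ioi] with s hs using (hpos s hs).le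

lemma arg_hankelBase_pos (x : ℝ) {s : ℝ} (hs : 0 < s) : 0 < (hankelBase x s).arg := by
  have him : 0 < (hankelBase x s).im := by rw [hankelBase_im]; positivity
  refine lt_of_le_of_ne (Complex.arg_nonneg_iff.2 him.le) fun h => ?_
  exact him.ne' (Complex.arg_eq_zero_iff.1 h.symm).2

lemma arg_hankelBase_lt {x : ℝ} (hx : 0 < x) (s : ℝ) : (hankelBase x s).arg < π / 2 :=
  Complex.arg_lt_pi_div_two_iff.2 (Or.inl (by rwa [hankelBase_re]))

lemma arg_hankelBase_le {x s : ℝ} (hx : 0 < x) (hs : 0 < s) :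
    (hankelBase x s).arg ≤ s / (2 * x) := by
  have h := Real.le_tan (arg_hankelBase_pos x hs).le (arg_hankelBase_lt hx s)
  rw [Complex.tan_arg, hankelBase_re, hankelBase_im, div_div] at h
  exact h

/-- The integrated modulus of the integrand of `hankelInt (-1 / 6) x`. -/
def hankelMass (x : ℝ) : ℝ := ∫ s in Set.Ioi (0 : ℝ), hankelAmp x s

lemma hankelMass_pos {x : ℝ} (hx : 0 < x) : 0 < hankelMass x :=
  setIntegral_Ioi_pos (integrableOn_hankelAmp hx) fun _ hs => hankelAmp_pos x hs

/-- The argument of `hankelInt (-1 / 6) x` lies in `(-π/12, 0)`. -/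
lemma hankelInt_mul_exp_re_pos {x θ : ℝ} (hx : 0 < x) (h1 : -(5 * π / 12) ≤ θ)
    (h2 : θ ≤ π / 2) : 0 < (hankelInt (-1 / 6) x * Complex.exp (θ * I)).re := by
  obtain ⟨hint, he⟩ := hankelInt_mul_exp_re hx θ
  rw [he]
  refine setIntegral_Ioi_pos hint fun s hs => mul_pos (hankelAmp_pos x hs) ?_
  have := arg_hankelBase_pos x hs
  have := arg_hankelBase_lt hx s
  exact Real.cos_pos_of_mem_Ioo ⟨by linarith, by linarith⟩

lemma half_hankelMass_le_im {x θ : ℝ} (hx : 0 < x) (h1 : π / 2 ≤ θ) (h2 : θ ≤ 7 * π / 12) :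
    hankelMass x / 2 ≤ (hankelInt (-1 / 6) x * Complex.exp (θ * I)).im := by
  obtain ⟨hint, he⟩ := hankelInt_mul_exp_im hx θ
  rw [he, hankelMass, ← integral_div]
  refine setIntegral_mono_on ((integrableOn_hankelAmp hx).div_const 2) hint measurableSet_Ioi
    fun s hs => ?_
  rw [div_eq_mul_one_div]
  have a1 := arg_hankelBase_pos x hs
  have a2 := arg_hankelBase_lt hx s
  refine mul_le_mul_of_nonneg_left ?_ (hankelAmp_pos x hs).le
  rw [← Real.cos_pi_div_three, ← Real.cos_sub_pi_div_two, ← Real.cos_abs (_ - π / 2)]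
  have hp := Real.pi_pos
  refine Real.cos_le_cos_of_nonneg_of_le_pi (abs_nonneg _) (by linarith) ?_
  rw [abs_le]; constructor <;> linarith

lemma norm_hankelInt_le {x : ℝ} (hx : 0 < x) :
    ‖hankelInt (-7 / 6) x‖ ≤ hankelMass x / x := by
  rw [hankelMass, ← integral_div, hankelInt]
  refine norm_integral_le_of_norm_le ((integrableOn_hankelAmp hx).div_const x) ?_
  filter_upwards [ae_restrict_mem measurableSet_Ioi] with s hs
  have hq : 0 < ‖hankelBase x s‖ := norm_pos_iff.2 (hankelBase_ne_zero hx s)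
  rw [norm_mul, Complex.norm_real, Real.norm_of_nonneg (hankelWeight_pos hs).le,
    Complex.norm_cpow_real, hankelAmp, mul_div_assoc]
  refine mul_le_mul_of_nonneg_left ?_ (hankelWeight_pos hs).le
  have : (-7 / 6 : ℝ) = -1 / 6 - 1 := by norm_num
  rw [this, Real.rpow_sub_one hq.ne']
  gcongr
  exact le_norm_hankelBase x s

lemma integrableOn_hankelWeight_mul_id :
    IntegrableOn (fun s => hankelWeight s * s) (Set.Ioi 0) := by
  have h := Real.GammaIntegral_convergent (s := 11 / 6) (by norm_num)
  refine IntegrableOn.congr_fun h (fun s hs => ?_) measurableSet_Ioi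
  simp only [hankelWeight]
  rw [mul_assoc, ← Real.rpow_add_one (ne_of_gt hs)]; norm_num

lemma norm_hankelBase_le {x s : ℝ} (hx : 1 ≤ x) (hs : 0 < s) :
    ‖hankelBase x s‖ ≤ x * (1 + s) := by
  have h := Complex.norm_le_abs_re_add_abs_im (hankelBase x s)
  rw [hankelBase_re, hankelBase_im, abs_of_pos (by linarith), abs_of_pos (by linarith)] at h
  nlinarith

/-- The argument of `hankelInt (-1 / 6) x` is `O(1 / x)`. -/
lemma exists_phase_le : ∃ C : ℝ, 0 < C ∧ ∀ x ψ : ℝ, 1 ≤ x → 0 ≤ ψ → ψ ≤ π / 12 →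
    (hankelInt (-1 / 6) x * Complex.exp ((π / 2 + ψ : ℝ) * I)).re = 0 → ψ ≤ C / x := by
  set A := ∫ s in Set.Ioi (0 : ℝ), hankelWeight s * (1 + s) ^ (-1 / 6 : ℝ) with hA
  set B := ∫ s in Set.Ioi (0 : ℝ), hankelWeight s * s with hB
  have hAint : IntegrableOn (fun s => hankelWeight s * (1 + s) ^ (-1 / 6 : ℝ)) (Set.Ioi 0) := by
    refine Integrable.mono' integrableOn_hankelWeight
      (integrableOn_hankelWeight.aestronglyMeasurable.mul
        (by fun_prop : Measurable fun s : ℝ => (1 + s) ^ (-1 / 6 : ℝ)).aestronglyMeasurable) ?_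
    filter_upwards [ae_restrict_mem measurableSet_Ioi] with s hs
    have hs' : 0 < s := hs
    have hw := hankelWeight_pos hs
    rw [Real.norm_of_nonneg (by positivity)]
    refine mul_le_of_le_one_right hw.le (Real.rpow_le_one_of_one_le_of_nonpos ?_ (by norm_num))
    linarith
  have hApos : 0 < A := setIntegral_Ioi_pos hAint fun s hs => by
    have hw := hankelWeight_pos hs
    positivity
  have hBpos : 0 < B := setIntegral_Ioi_pos integrableOn_hankelWeight_mul_id fun s hs =>
    mul_pos (hankelWeight_pos hs) hs
  refine ⟨B / (3 * A), by positivity, fun x ψ hx hψ0 hψ1 h0 => ?_⟩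
  have hx0 : 0 < x := by linarith
  obtain ⟨hint, he⟩ := hankelInt_mul_exp_re hx0 (π / 2 + ψ)
  rw [he] at h0
  have hxp : 0 < x ^ (-1 / 6 : ℝ) := Real.rpow_pos_of_pos hx0 _
  have hle : ∫ s in Set.Ioi (0 : ℝ), (hankelWeight s * (1 + s) ^ (-1 / 6 : ℝ) *
        (x ^ (-1 / 6 : ℝ) * (ψ / 4)) -
        hankelWeight s * s * (x ^ (-1 / 6 : ℝ) * (1 / (12 * x)))) ≤
      ∫ s in Set.Ioi (0 : ℝ),
        -(hankelAmp x s * Real.cos (π / 2 + ψ - (hankelBase x s).arg / 6)) := by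
    refine setIntegral_mono_on ((hAint.mul_const _).sub
      (integrableOn_hankelWeight_mul_id.mul_const _)) hint.neg measurableSet_Ioi fun s hs => ?_
    have hs' : 0 < s := hs
    have a1 := arg_hankelBase_pos x hs
    have a2 := arg_hankelBase_lt hx0 s
    have a3 := arg_hankelBase_le hx0 hs
    have hw := hankelWeight_pos hs
    have hamp := hankelAmp_pos x hs
    have hp := Real.pi_pos
    set a := (hankelBase x s).arg / 6 with ha
    have hcos : Real.cos (π / 2 + ψ - a) =
        -(Real.sin ψ * Real.cos a - Real.cos ψ * Real.sin a) := by
      rw [← Real.sin_sub, add_sub_assoc, add_comm, Real.cos_add_pi_div_two]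
    have hsin : ψ / 4 - a ≤ Real.sin ψ * Real.cos a - Real.cos ψ * Real.sin a := by
      have b1 : 2 / π * ψ ≤ Real.sin ψ := Real.mul_le_sin hψ0 (by linarith)
      have b2 : 1 / 2 ≤ Real.cos a := by
        rw [← Real.cos_pi_div_three]
        exact Real.cos_le_cos_of_nonneg_of_le_pi (by linarith) (by linarith) (by linarith)
      have b3 : Real.sin a ≤ a := Real.sin_le (by linarith)
      have b4 : 0 ≤ Real.sin a := Real.sin_nonneg_of_nonneg_of_le_pi (by linarith) (by linarith)
      have b5 : 1 / 2 ≤ 2 / π := by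
        rw [div_le_div_iff₀ (by norm_num) hp]; linarith [Real.pi_le_four]
      have b6 : ψ / 2 ≤ Real.sin ψ := by nlinarith
      nlinarith [Real.cos_le_one ψ, mul_le_mul b6 b2 (by norm_num) (by linarith)]
    have u1 : hankelWeight s * (1 + s) ^ (-1 / 6 : ℝ) * x ^ (-1 / 6 : ℝ) ≤ hankelAmp x s := by
      rw [mul_assoc, ← Real.mul_rpow (by linarith) hx0.le, hankelAmp, mul_comm (1 + s)]
      refine mul_le_mul_of_nonneg_left ?_ hw.le
      exact Real.rpow_le_rpow_of_nonpos (norm_pos_iff.2 (hankelBase_ne_zero hx0 s))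
        (norm_hankelBase_le hx hs) (by norm_num)
    have u2 : hankelAmp x s ≤ hankelWeight s * x ^ (-1 / 6 : ℝ) := by
      refine mul_le_mul_of_nonneg_left ?_ hw.le
      exact Real.rpow_le_rpow_of_nonpos hx0 (le_norm_hankelBase x s) (by norm_num)
    have u3 : a ≤ s * (1 / (12 * x)) := by
      rw [ha]; calc _ ≤ s / (2 * x) / 6 := by gcongr
        _ = _ := by field_simp; norm_num
    rw [hcos]
    have v1 := mul_le_mul_of_nonneg_right u1 (by linarith : 0 ≤ ψ / 4)
    have v2 := mul_le_mul u2 u3 (by linarith) (by positivity)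
    have v3 := mul_le_mul_of_nonneg_left hsin hamp.le
    nlinarith
  rw [integral_neg, h0, integral_sub (hAint.mul_const _)
    (integrableOn_hankelWeight_mul_id.mul_const _), integral_mul_const, integral_mul_const,
    ← hA, ← hB] at hle
  have h3 : A * (ψ / 4) ≤ B * (1 / (12 * x)) := by
    refine le_of_mul_le_mul_left ?_ hxp
    linarith
  rw [le_div_iff₀ hx0, le_div_iff₀ (by positivity)]
  field_simp at h3
  linarith

lemma integrableOn_hankelWeight_mul_rpow :
    IntegrableOn (fun s => hankelWeight s * (s / 2) ^ (-1 / 6 : ℝ)) (Set.Ioi 0) := by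
  have h := (Real.GammaIntegral_convergent (s := 2 / 3) (by norm_num)).mul_const
    ((2 : ℝ) ^ (-1 / 6 : ℝ))⁻¹
  refine IntegrableOn.congr_fun h (fun s hs => ?_) measurableSet_Ioi
  have hs : 0 < s := hs
  have e : s ^ (2 / 3 - 1 : ℝ) = s ^ (-(1 / 6) : ℝ) * s ^ (-1 / 6 : ℝ) := by
    rw [← Real.rpow_add hs]; norm_num
  simp only [hankelWeight]
  rw [Real.div_rpow hs.le (by norm_num), e]
  ring

lemma tendsto_hankelInt_zero :
    Filter.Tendsto (hankelInt (-1 / 6)) (nhdsWithin 0 (Set.Ioi 0))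
      (nhds (hankelInt (-1 / 6) 0)) := by
  refine tendsto_integral_filter_of_dominated_convergence
    (fun s => hankelWeight s * (s / 2) ^ (-1 / 6 : ℝ)) ?_ ?_ integrableOn_hankelWeight_mul_rpow ?_
  · filter_upwards [self_mem_nhdsWithin] with x hx
    exact aestronglyMeasurable_hankelInt hx _
  · filter_upwards [self_mem_nhdsWithin] with x hx
    filter_upwards [ae_restrict_mem measurableSet_Ioi] with s hs
    have hs' : 0 < s := hs
    rw [norm_mul, Complex.norm_real, Real.norm_of_nonneg (hankelWeight_pos hs).le,
      Complex.norm_cpow_real]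
    refine mul_le_mul_of_nonneg_left ?_ (hankelWeight_pos hs).le
    refine Real.rpow_le_rpow_of_nonpos (by positivity) ?_ (by norm_num)
    have := (le_abs_self _).trans (Complex.abs_im_le_norm (hankelBase x s))
    rwa [hankelBase_im] at this
  · filter_upwards [ae_restrict_mem measurableSet_Ioi] with s hs
    have hs' : 0 < s := hs
    refine Filter.Tendsto.const_mul _ (Filter.Tendsto.mono_left ?_ nhdsWithin_le_nhds)
    have hc : ContinuousAt (fun x => hankelBase x s) 0 := by
      unfold hankelBase; fun_prop
    refine hc.tendsto.cpow tendsto_const_nhds ?_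
    right; rw [hankelBase_im]; positivity

lemma hankelInt_zero_mul_exp_re :
    (hankelInt (-1 / 6) 0 * Complex.exp ((-(5 * π / 12) : ℝ) * I)).re = 0 := by
  rw [hankelInt_mul_exp]
  have e : ∀ s ∈ Set.Ioi (0 : ℝ), (hankelAmp 0 s : ℂ) *
      Complex.exp ((-(5 * π / 12) - (hankelBase 0 s).arg / 6 : ℝ) * I) =
      (hankelAmp 0 s : ℂ) * (-I) := fun s hs => by
    have harg : (hankelBase 0 s).arg = π / 2 :=
      Complex.arg_eq_pi_div_two_iff.2 ⟨hankelBase_re 0 s, by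
        rw [hankelBase_im]; exact half_pos hs⟩
    rw [harg, ← Complex.exp_neg_pi_div_two_mul_I]
    push_cast
    congr 3
    ring
  rw [setIntegral_congr_fun measurableSet_Ioi e, integral_mul_const, integral_complex_ofReal]
  simp

/-- The Hankel-type solution `e^{i (x - 5π/12)} ∫₀^∞ e^{-s} s^{-1/6} (x + i s / 2)^{-1/6} ds`. -/
def hankelSol (x : ℝ) : ℂ := hankelInt (-1 / 6) x * Complex.exp ((x - 5 * π / 12 : ℝ) * I)

/-- The derivative of `hankelSol`. -/
def hankelSolDeriv (x : ℝ) : ℂ :=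
  (-1 / 6 * hankelInt (-7 / 6) x + I * hankelInt (-1 / 6) x) *
    Complex.exp ((x - 5 * π / 12 : ℝ) * I)

lemma hasDerivAt_exp_phase (x : ℝ) :
    HasDerivAt (fun x : ℝ => Complex.exp ((x - 5 * π / 12 : ℝ) * I))
      (I * Complex.exp ((x - 5 * π / 12 : ℝ) * I)) x := by
  have h : HasDerivAt (fun x : ℝ => ((x - 5 * π / 12 : ℝ) : ℂ) * I) (((1 : ℝ) : ℂ) * I) x :=
    ((hasDerivAt_id x).sub_const (5 * π / 12)).ofReal_comp.mul_const I
  refine h.cexp.congr_deriv ?_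
  push_cast; ring

lemma hasDerivAt_hankelSol {x : ℝ} (hx : 0 < x) :
    HasDerivAt hankelSol (hankelSolDeriv x) x := by
  have h1 := hasDerivAt_hankelInt hx (c := -1 / 6) (by norm_num)
  have e1 : (-1 / 6 - 1 : ℝ) = -7 / 6 := by norm_num
  rw [e1] at h1
  refine (h1.mul (hasDerivAt_exp_phase x)).congr_deriv ?_
  rw [hankelSolDeriv]
  push_cast; ring

lemma hasDerivAt_hankelSolDeriv {x : ℝ} (hx : 0 < x) :
    HasDerivAt hankelSolDeriv (-hankelSol x - hankelSolDeriv x / (3 * x)) x := by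
  have h1 := hasDerivAt_hankelInt hx (c := -1 / 6) (by norm_num)
  have h2 := hasDerivAt_hankelInt hx (c := -7 / 6) (by norm_num)
  have e1 : (-1 / 6 - 1 : ℝ) = -7 / 6 := by norm_num
  have e2 : (-7 / 6 - 1 : ℝ) = -13 / 6 := by norm_num
  rw [e1] at h1
  rw [e2] at h2
  refine (((h2.const_mul (-1 / 6)).add (h1.const_mul I)).mul
    (hasDerivAt_exp_phase x)).congr_deriv ?_
  have hrec := hankelInt_recurrence hx
  have hx' : (x : ℂ) ≠ 0 := by exact_mod_cast hx.ne'
  simp only [Pi.add_apply]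
  rw [hankelSol, hankelSolDeriv]
  generalize hankelInt (-1 / 6) x = a at *
  generalize hankelInt (-7 / 6) x = b at *
  generalize hankelInt (-13 / 6) x = c at *
  generalize Complex.exp ((x - 5 * π / 12 : ℝ) * I) = E at *
  push_cast
  field_simp
  linear_combination (18 * E) * hrec + (108 * E * x * a) * Complex.I_sq

/-- The Liouville variable `(2 / 3) r^{3/2}` of the Airy equation. -/
def liouville (r : ℝ) : ℝ := 2 / 3 * r ^ (3 / 2 : ℝ)

lemma liouville_pos {r : ℝ} (hr : 0 < r) : 0 < liouville r := by
  unfold liouville; positivity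

lemma liouville_lt {r t : ℝ} (hr : 0 < r) (h : r < t) : liouville r < liouville t := by
  unfold liouville
  have := Real.rpow_lt_rpow hr.le h (by norm_num : (0 : ℝ) < 3 / 2)
  linarith

lemma hasDerivAt_liouville {r : ℝ} (hr : 0 < r) :
    HasDerivAt liouville (r ^ (1 / 2 : ℝ)) r := by
  have h := (Real.hasDerivAt_rpow_const (x := r) (p := 3 / 2) (Or.inl hr.ne')).const_mul (2 / 3)
  refine h.congr_deriv ?_
  norm_num; ring

/-- The real solution of `w'' = -r w` that vanishes at the origin. -/
def airySol (r : ℝ) : ℝ := (hankelSol (liouville r)).re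

/-- The derivative of `airySol`. -/
def airySolDeriv (r : ℝ) : ℝ := (hankelSolDeriv (liouville r)).re * r ^ (1 / 2 : ℝ)

lemma HasDerivAt.complex_re {f : ℝ → ℂ} {f' : ℂ} {x : ℝ} (h : HasDerivAt f f' x) :
    HasDerivAt (fun x => (f x).re) f'.re x :=
  Complex.reCLM.hasFDerivAt.comp_hasDerivAt x h

lemma hasDerivAt_airySol {r : ℝ} (hr : 0 < r) : HasDerivAt airySol (airySolDeriv r) r :=
  (hasDerivAt_hankelSol (liouville_pos hr)).complex_re.comp r (hasDerivAt_liouville hr)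

lemma hasDerivAt_airySolDeriv {r : ℝ} (hr : 0 < r) :
    HasDerivAt airySolDeriv (-r * airySol r) r := by
  have h1 := (hasDerivAt_hankelSolDeriv (liouville_pos hr)).complex_re.comp r
    (hasDerivAt_liouville hr)
  have h2 := Real.hasDerivAt_rpow_const (x := r) (p := 1 / 2) (Or.inl hr.ne')
  refine (h1.mul h2).congr_deriv ?_
  have ez : (hankelSolDeriv (liouville r) / (3 * (liouville r : ℂ))).re =
      (hankelSolDeriv (liouville r)).re / (3 * liouville r) := by
    rw [← Complex.div_ofReal_re]; push_cast; rfl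
  have el : liouville r = 2 / 3 * (r * r ^ (1 / 2 : ℝ)) := by
    rw [liouville, ← Real.rpow_one_add' hr.le (by norm_num)]; norm_num
  have e3 : r ^ (1 / 2 - 1 : ℝ) = r ^ (1 / 2 : ℝ) / r := Real.rpow_sub_one hr.ne' _
  have e4 : r ^ (1 / 2 : ℝ) * r ^ (1 / 2 : ℝ) = r := by
    rw [← Real.rpow_add hr]; norm_num
  simp only [Function.comp_def]
  rw [Complex.sub_re, Complex.neg_re, ez, airySol, e3]
  have hq : 0 < r ^ (1 / 2 : ℝ) := by positivity
  generalize (hankelSol (liouville r)).re = a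
  generalize (hankelSolDeriv (liouville r)).re = b
  rw [el]
  generalize r ^ (1 / 2 : ℝ) = q at *
  field_simp
  rw [← e4]
  ring

lemma tendsto_airySol_zero :
    Filter.Tendsto airySol (nhdsWithin 0 (Set.Ioi 0)) (nhds 0) := by
  have h1 : Filter.Tendsto liouville (nhdsWithin 0 (Set.Ioi 0)) (nhdsWithin 0 (Set.Ioi 0)) := by
    refine tendsto_nhdsWithin_of_tendsto_nhds_of_eventually_within _ ?_ ?_
    · have : ContinuousAt liouville 0 := by
        unfold liouville
        exact (Real.continuousAt_rpow_const _ _ (Or.inr (by norm_num))).const_mul _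
      have h := this.tendsto
      rw [show liouville 0 = 0 by simp [liouville]] at h
      exact h.mono_left nhdsWithin_le_nhds
    · filter_upwards [self_mem_nhdsWithin] with r hr using liouville_pos hr
  have h2 : Filter.Tendsto (fun x : ℝ => Complex.exp ((x - 5 * π / 12 : ℝ) * I))
      (nhdsWithin 0 (Set.Ioi 0)) (nhds (Complex.exp ((-(5 * π / 12) : ℝ) * I))) := by
    have h := (hasDerivAt_exp_phase 0).continuousAt.tendsto
    rw [zero_sub] at h
    exact h.mono_left nhdsWithin_le_nhds
  have h3 := (Complex.continuous_re.tendsto _).comp (tendsto_hankelInt_zero.mul h2)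
  rw [hankelInt_zero_mul_exp_re] at h3
  exact h3.comp h1

/-- The Wronskian of two solutions of `u'' = -t u` is constant. -/
lemma wronskian_const {S : Set ℝ} (hS : IsOpen S) (hc : IsPreconnected S) {u u' v v' : ℝ → ℂ}
    (hu : ∀ t ∈ S, HasDerivAt u (u' t) t) (hu' : ∀ t ∈ S, HasDerivAt u' (-t * u t) t)
    (hv : ∀ t ∈ S, HasDerivAt v (v' t) t) (hv' : ∀ t ∈ S, HasDerivAt v' (-t * v t) t) :
    ∃ c : ℂ, ∀ t ∈ S, u t * v' t - u' t * v t = c := by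
  have hd : ∀ t ∈ S, HasDerivAt (fun t => u t * v' t - u' t * v t) 0 t := fun t ht => by
    refine (((hu t ht).mul (hv' t ht)).sub ((hu' t ht).mul (hv t ht))).congr_deriv ?_
    ring
  exact hS.exists_is_const_of_deriv_eq_zero hc
    (fun t ht => (hd t ht).differentiableAt.differentiableWithinAt) fun t ht => (hd t ht).deriv

/-- The direction `e^{iπ/3}` of the ray. -/
def rayDir : ℂ := Complex.exp ((π / 3 : ℝ) * I)

lemma rayDir_pow_three : rayDir ^ 3 = -1 := by
  rw [rayDir, ← Complex.exp_nat_mul, ← Complex.exp_pi_mul_I]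
  congr 1
  push_cast; ring

lemma IsAiry.hasDerivAt_ray {w : ℂ → ℂ} {a b : ℝ} (h : IsAiry w a b) (t : ℝ) :
    HasDerivAt (fun t : ℝ => w (t * rayDir)) (rayDir * deriv w (t * rayDir)) t ∧
    HasDerivAt (fun t : ℝ => rayDir * deriv w (t * rayDir)) (-t * w (t * rayDir)) t := by
  have hl : HasDerivAt (fun t : ℝ => (t : ℂ) * rayDir) rayDir t := by
    simpa using (hasDerivAt_id t).ofReal_comp.mul_const rayDir
  constructor
  · refine ((h.1 _).hasDerivAt.comp t hl).congr_deriv ?_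
    ring
  · refine (((h.2.1 _).hasDerivAt.comp t hl).const_mul rayDir).congr_deriv ?_
    rw [h.2.2.1]
    linear_combination (t * w (t * rayDir)) * rayDir_pow_three

lemma isAiry_Uminus {Ai Bi : ℂ → ℂ} (hAi : IsAiryAi Ai) (hBi : IsAiryBi Bi) :
    ∃ b : ℝ, 0 < b ∧ IsAiry (Uminus Ai Bi) 0 b := by
  obtain ⟨a1, a2, a3, a4, a5⟩ := hAi
  obtain ⟨b1, b2, b3, b4, b5⟩ := hBi
  have hd : deriv (Uminus Ai Bi) = fun z => -(Real.sqrt 3 : ℂ) * deriv Ai z + deriv Bi z := by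
    ext z
    exact (((a1 z).hasDerivAt.const_mul _).add (b1 z).hasDerivAt).deriv
  have g1 : 0 < Real.Gamma (1 / 3) := Real.Gamma_pos_of_pos (by norm_num)
  refine ⟨Real.sqrt 3 * ((3 : ℝ) ^ (-(1 : ℝ) / 3) / Real.Gamma (1 / 3)) +
    (3 : ℝ) ^ ((1 : ℝ) / 6) / Real.Gamma (1 / 3), by positivity, ?_, ?_, ?_, ?_, ?_⟩
  · exact (a1.const_mul _).add b1
  · rw [hd]; exact (a2.const_mul _).add b2
  · intro z
    rw [hd]
    refine (((a2 z).hasDerivAt.const_mul _).add (b2 z).hasDerivAt).deriv.trans ?_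
    rw [a3, b3, Uminus]
    ring
  · rw [Uminus, a4, b4]
    have : Real.sqrt 3 * (3 : ℝ) ^ (-(2 : ℝ) / 3) = (3 : ℝ) ^ (-(1 : ℝ) / 6) := by
      rw [Real.sqrt_eq_rpow, ← Real.rpow_add (by norm_num)]; norm_num
    rw [← this]
    push_cast; ring
  · rw [hd]
    simp only
    rw [a5, b5]
    push_cast; ring

lemma ofReal_airySol_hasDerivAt {t : ℝ} (ht : 0 < t) :
    HasDerivAt (fun t => (airySol t : ℂ)) (airySolDeriv t) t ∧
    HasDerivAt (fun t => (airySolDeriv t : ℂ)) (-t * airySol t) t := by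
  refine ⟨(hasDerivAt_airySol ht).ofReal_comp, ?_⟩
  refine (hasDerivAt_airySolDeriv ht).ofReal_comp.congr_deriv ?_
  push_cast; ring

/-- On the ray, `U₋` and `airySol` have the same zeros. -/
lemma Uminus_ray_eq_zero_iff {Ai Bi : ℂ → ℂ} (hAi : IsAiryAi Ai) (hBi : IsAiryBi Bi)
    (hne : ∃ t : ℝ, 0 < t ∧ airySol t ≠ 0) {r : ℝ} (hr : 0 < r) :
    Uminus Ai Bi (r * rayDir) = 0 ↔ airySol r = 0 := by
  obtain ⟨b, hb, hU⟩ := isAiry_Uminus hAi hBi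
  have hA0 : Ai 0 ≠ 0 := by
    have h2 : 0 < Real.Gamma (2 / 3) := Real.Gamma_pos_of_pos (by norm_num)
    rw [hAi.2.2.2.1]
    exact_mod_cast (by positivity :
      (0 : ℝ) < (3 : ℝ) ^ (-(2 : ℝ) / 3) / Real.Gamma (2 / 3)).ne'
  have hdir : rayDir ≠ 0 := Complex.exp_ne_zero _
  obtain ⟨W, hW⟩ := wronskian_const isOpen_univ isPreconnected_univ
    (fun t _ => (hU.hasDerivAt_ray t).1) (fun t _ => (hU.hasDerivAt_ray t).2)
    (fun t _ => (IsAiry.hasDerivAt_ray hAi t).1) (fun t _ => (IsAiry.hasDerivAt_ray hAi t).2)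
  obtain ⟨A, hA⟩ := wronskian_const isOpen_Ioi isPreconnected_Ioi
    (fun t ht => (ofReal_airySol_hasDerivAt ht).1) (fun t ht => (ofReal_airySol_hasDerivAt ht).2)
    (fun t _ => (IsAiry.hasDerivAt_ray hAi t).1) (fun t _ => (IsAiry.hasDerivAt_ray hAi t).2)
  obtain ⟨B, hB⟩ := wronskian_const isOpen_Ioi isPreconnected_Ioi
    (fun t ht => (ofReal_airySol_hasDerivAt ht).1) (fun t ht => (ofReal_airySol_hasDerivAt ht).2)
    (fun t _ => (hU.hasDerivAt_ray t).1) (fun t _ => (hU.hasDerivAt_ray t).2)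
  have hW0 : W ≠ 0 := by
    rw [← hW 0 trivial]
    simp [hU.2.2.2.1, hU.2.2.2.2, hA0, hdir, hb.ne']
  have hrel : ∀ t : ℝ, 0 < t → airySol t * W =
      Uminus Ai Bi (t * rayDir) * A - Ai (t * rayDir) * B := fun t ht => by
    rw [← hW t trivial, ← hA t ht, ← hB t ht]; ring
  have hB0 : B = 0 := by
    have l1 : Filter.Tendsto (fun t : ℝ => (airySol t : ℂ) * W) (nhdsWithin 0 (Set.Ioi 0))
        (nhds (((0 : ℝ) : ℂ) * W)) :=
      ((Complex.continuous_ofReal.tendsto 0).comp tendsto_airySol_zero).mul_const W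
    have l2 : Filter.Tendsto (fun t : ℝ => Uminus Ai Bi (t * rayDir) * A - Ai (t * rayDir) * B)
        (nhdsWithin 0 (Set.Ioi 0)) (nhds (Uminus Ai Bi 0 * A - Ai 0 * B)) := by
      have h : Filter.Tendsto
          (fun t : ℝ => Uminus Ai Bi (t * rayDir) * A - Ai (t * rayDir) * B) (nhds 0)
          (nhds (Uminus Ai Bi ((0 : ℝ) * rayDir) * A - Ai ((0 : ℝ) * rayDir) * B)) :=
        (((hU.hasDerivAt_ray 0).1.continuousAt.mul_const A).sub
        ((IsAiry.hasDerivAt_ray hAi 0).1.continuousAt.mul_const B)).tendsto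
      rw [Complex.ofReal_zero, zero_mul] at h
      exact h.mono_left nhdsWithin_le_nhds
    have l3 := l2.congr' (f₂ := fun t : ℝ => (airySol t : ℂ) * W) (by
      filter_upwards [self_mem_nhdsWithin] with t ht using (hrel t ht).symm)
    have h := tendsto_nhds_unique l1 l3
    rw [hU.2.2.2.1] at h
    simpa [hA0] using h
  subst hB0
  simp only [mul_zero, sub_zero] at hrel
  obtain ⟨t, ht, htne⟩ := hne
  have hA1 : A ≠ 0 := by
    rintro rfl
    have := hrel t ht
    simp [htne, hW0] at this
  have h := hrel r hr
  constructor
  · intro h0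
    rw [h0, zero_mul] at h
    simpa [hW0] using h
  · intro h0
    rw [h0] at h
    simpa [hA1] using h.symm

lemma exp_phase_eq (m : ℕ) (x : ℝ) :
    Complex.exp ((x - 5 * π / 12 : ℝ) * I) =
      ((-1) ^ m : ℝ) * Complex.exp ((x - m * π - 5 * π / 12 : ℝ) * I) := by
  have h : ((-1) ^ m : ℂ) = Complex.exp (m * (π * I)) := by
    rw [Complex.exp_nat_mul, Complex.exp_pi_mul_I]
  push_cast
  rw [h, ← Complex.exp_add]
  congr 1; ring

lemma neg_one_pow_mul_self (m : ℕ) : ((-1 : ℝ) ^ m) * (-1) ^ m = 1 := by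
  rw [← mul_pow]; norm_num

lemma neg_one_pow_mul_hankelSol_re (m : ℕ) (x : ℝ) :
    (-1) ^ m * (hankelSol x).re =
      (hankelInt (-1 / 6) x * Complex.exp ((x - m * π - 5 * π / 12 : ℝ) * I)).re := by
  rw [hankelSol, exp_phase_eq m x, mul_left_comm, Complex.re_ofReal_mul, ← mul_assoc,
    neg_one_pow_mul_self, one_mul]

lemma neg_one_pow_mul_hankelSol_re_pos (m : ℕ) {x : ℝ} (hx : 0 < x) (h1 : m * π ≤ x)
    (h2 : x ≤ m * π + 11 * π / 12) : 0 < (-1) ^ m * (hankelSol x).re := by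
  rw [neg_one_pow_mul_hankelSol_re]
  exact hankelInt_mul_exp_re_pos hx (by linarith) (by linarith)

/-- Positive zeros of `Re hankelSol` lie slightly below positive multiples of `π`. -/
lemma exists_nat_of_hankelSol_re_eq_zero {x : ℝ} (hx : 0 < x) (h0 : (hankelSol x).re = 0) :
    ∃ m : ℕ, m * π + 11 * π / 12 < x ∧ x < m * π + π := by
  have hp := Real.pi_pos
  have h1 : (⌊x / π⌋₊ : ℝ) * π ≤ x := by
    rw [← le_div_iff₀ hp]; exact Nat.floor_le (by positivity)
  have h2 : x < ⌊x / π⌋₊ * π + π := by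
    have := Nat.lt_floor_add_one (x / π)
    rw [div_lt_iff₀ hp] at this
    linarith
  refine ⟨⌊x / π⌋₊, ?_, h2⟩
  by_contra! h
  have := neg_one_pow_mul_hankelSol_re_pos _ hx h1 h
  simp [h0] at this

lemma strictAntiOn_neg_one_pow_mul_hankelSol_re (m : ℕ) :
    StrictAntiOn (fun x => (-1) ^ m * (hankelSol x).re)
      (Set.Icc (m * π + 11 * π / 12) (m * π + π)) := by
  have hp := Real.pi_gt_three
  have hm : 0 ≤ m * π := by positivity
  have hd : ∀ x, 0 < x → HasDerivAt (fun x => (-1) ^ m * (hankelSol x).re)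
      ((-1) ^ m * (hankelSolDeriv x).re) x := fun x hx =>
    (hasDerivAt_hankelSol hx).complex_re.const_mul _
  refine strictAntiOn_of_deriv_neg (convex_Icc _ _) (fun x hx => ?_) fun x hx => ?_
  · exact (hd x (by linarith [hx.1])).continuousAt.continuousWithinAt
  · rw [interior_Icc] at hx
    have hx1 : 1 < x := by linarith [hx.1]
    have hx0 : 0 < x := by linarith
    rw [(hd x hx0).deriv, hankelSolDeriv, exp_phase_eq m x, mul_left_comm, Complex.re_ofReal_mul,
      ← mul_assoc, neg_one_pow_mul_self, one_mul, add_mul, Complex.add_re, mul_assoc I,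
      Complex.I_mul_re]
    have him := half_hankelMass_le_im hx0 (θ := x - m * π - 5 * π / 12)
      (by linarith [hx.1]) (by linarith [hx.2])
    have hre : (-1 / 6 * hankelInt (-7 / 6) x *
        Complex.exp ((x - m * π - 5 * π / 12 : ℝ) * I)).re ≤ 1 / 6 * (hankelMass x / x) := by
      refine (Complex.re_le_norm _).trans ?_
      rw [norm_mul, Complex.norm_exp_ofReal_mul_I, mul_one, norm_mul]
      have : ‖(-1 / 6 : ℂ)‖ = 1 / 6 := by norm_num
      rw [this]
      gcongr
      exact norm_hankelInt_le hx0
    have hM := hankelMass_pos hx0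
    have : hankelMass x / x ≤ hankelMass x := div_le_self hM.le hx1.le
    linarith

lemma exists_hankelSol_re_eq_zero (m : ℕ) :
    ∃ x ∈ Set.Icc (m * π + 11 * π / 12) (m * π + π), (hankelSol x).re = 0 := by
  have hp := Real.pi_pos
  have hm : 0 ≤ m * π := by positivity
  have hl := neg_one_pow_mul_hankelSol_re_pos m (x := m * π + 11 * π / 12) (by positivity)
    (by linarith) le_rfl
  have hr := neg_one_pow_mul_hankelSol_re_pos (m + 1) (x := m * π + π) (by positivity)
    (by push_cast; linarith) (by push_cast; linarith)
  rw [pow_succ] at hr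
  have hcont : ContinuousOn (fun x => (-1) ^ m * (hankelSol x).re)
      (Set.Icc (m * π + 11 * π / 12) (m * π + π)) := fun x hx =>
    ((hasDerivAt_hankelSol (by linarith [hx.1])).complex_re.const_mul
      _).continuousAt.continuousWithinAt
  obtain ⟨x, hx, h0⟩ := intermediate_value_Icc' (by linarith) hcont
    (show (0 : ℝ) ∈ Set.Icc _ _ from ⟨by linarith, hl.le⟩)
  exact ⟨x, hx, by simpa using h0⟩

lemma exists_liouville_eq {x : ℝ} (hx : 0 < x) : ∃ r, 0 < r ∧ liouville r = x := by
  refine ⟨(3 / 2 * x) ^ (2 / 3 : ℝ), by positivity, ?_⟩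
  rw [liouville, ← Real.rpow_mul (by positivity)]
  norm_num; ring

lemma exists_airySol_ne_zero : ∃ t : ℝ, 0 < t ∧ airySol t ≠ 0 := by
  have hp := Real.pi_gt_three
  obtain ⟨r, hr, h⟩ := exists_liouville_eq one_pos
  refine ⟨r, hr, fun h0 => ?_⟩
  rw [airySol, h] at h0
  have := neg_one_pow_mul_hankelSol_re_pos 0 (x := 1) one_pos (by simp) (by simp; linarith)
  simp [h0] at this

lemma sqrt_epsilon_eq_liouville {a : ℝ} (ha : 0 < a) :
    Real.sqrt ((Real.sqrt 3 * a / 2) ^ 3 / (Real.sqrt 3 / 4 * (3 / 2) ^ 3)) = liouville a := by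
  rw [Real.sqrt_eq_iff_mul_self_eq_of_pos (liouville_pos ha)]
  have e : a ^ (3 / 2 : ℝ) * a ^ (3 / 2 : ℝ) = a ^ 3 := by
    rw [← Real.rpow_add ha, ← Real.rpow_natCast]; norm_num
  have h3 : Real.sqrt 3 * Real.sqrt 3 = 3 := Real.mul_self_sqrt (by norm_num)
  have h3' : 0 < Real.sqrt 3 := by positivity
  rw [liouville]
  calc _ = 4 / 9 * (a ^ (3 / 2 : ℝ) * a ^ (3 / 2 : ℝ)) := by ring
    _ = _ := by
      rw [e, eq_div_iff (by positivity)]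
      linear_combination (-(Real.sqrt 3 * a ^ 3 / 8)) * h3

/-- Asymptotics of the critical values `ε_k = (√3·α_k/2)³`:
`ε_k = (√3/4)(3/2)³(πk − π/12 + O(1/k))²` as `k → ∞` (here `α` enumerates the moduli
of the zeros of `U₋` on the ray `arg z = π/3` increasingly, indexed from `0`,
so `α (k-1)` is the paper's `α_k`). -/
theorem epsilon_asymptotics (Ai Bi : ℂ → ℂ)
    (hAi : IsAiryAi Ai) (hBi : IsAiryBi Bi)
    (α : ℕ → ℝ) (hmono : StrictMono α)
    (hrange : Set.range α = rayZeroModuli (Uminus Ai Bi)) :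
    ∃ C : ℝ, 0 < C ∧ ∀ k : ℕ,
      |Real.sqrt ((Real.sqrt 3 * α k / 2) ^ 3 / (Real.sqrt 3 / 4 * (3 / 2) ^ 3))
        - (π * (k + 1) - π / 12)| ≤ C / (k + 1) := by
  obtain ⟨C, hC, hphase⟩ := exists_phase_le
  have hp := Real.pi_gt_three
  have hiff : ∀ r : ℝ, r ∈ Set.range α ↔ 0 < r ∧ (hankelSol (liouville r)).re = 0 := fun r => by
    rw [hrange]
    exact and_congr_right fun hr => Uminus_ray_eq_zero_iff hAi hBi exists_airySol_ne_zero hr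
  have hα : ∀ k, 0 < α k ∧ (hankelSol (liouville (α k))).re = 0 := fun k =>
    (hiff _).1 ⟨k, rfl⟩
  choose m hm using fun k =>
    exists_nat_of_hankelSol_re_eq_zero (liouville_pos (hα k).1) (hα k).2
  have hinj : ∀ {n : ℕ} {x y : ℝ}, x ∈ Set.Icc (n * π + 11 * π / 12) (n * π + π) →
      y ∈ Set.Icc (n * π + 11 * π / 12) (n * π + π) → (hankelSol x).re = 0 →
      (hankelSol y).re = 0 → x = y := fun {n x y} hx hy hx0 hy0 =>
    (strictAntiOn_neg_one_pow_mul_hankelSol_re n).injOn hx hy (by simp [hx0, hy0])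
  have hmmono : StrictMono m := fun j k hjk => by
    have hlt := liouville_lt (hα j).1 (hmono hjk)
    rcases lt_trichotomy (m j) (m k) with h | h | h
    · exact h
    · have hk := hm k
      rw [← h] at hk
      exact absurd (hinj ⟨(hm j).1.le, (hm j).2.le⟩ ⟨hk.1.le, hk.2.le⟩ (hα j).2 (hα k).2) hlt.ne
    · have h' : (m k : ℝ) + 1 ≤ m j := by exact_mod_cast h
      nlinarith [(hm j).1, (hm k).2]
  have hmid : m = id := by
    refine (hmmono.range_inj strictMono_id).1 ?_
    rw [Set.range_id]
    refine Set.eq_univ_of_forall fun n => ?_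
    obtain ⟨x, hx, hx0⟩ := exists_hankelSol_re_eq_zero n
    have hn : 0 ≤ n * π := by positivity
    obtain ⟨r, hr, rfl⟩ := exists_liouville_eq (by linarith [hx.1] : 0 < x)
    obtain ⟨k, rfl⟩ := (hiff r).2 ⟨hr, hx0⟩
    refine ⟨k, ?_⟩
    rcases lt_trichotomy (m k) n with h | h | h
    · have h' : (m k : ℝ) + 1 ≤ n := by exact_mod_cast h
      nlinarith [(hm k).2, hx.1]
    · exact h
    · have h' : (n : ℝ) + 1 ≤ m k := by exact_mod_cast h
      nlinarith [(hm k).1, hx.2]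
  refine ⟨C, hC, fun k => ?_⟩
  have hk := hm k
  rw [hmid, id] at hk
  rw [sqrt_epsilon_eq_liouville (hα k).1]
  have h0 := neg_one_pow_mul_hankelSol_re k (liouville (α k))
  rw [(hα k).2, mul_zero] at h0
  generalize liouville (α k) = x at *
  have hk0 : (0 : ℝ) ≤ k := Nat.cast_nonneg k
  have hxk : (k : ℝ) + 1 ≤ x := by nlinarith
  have hψ := hphase x (x - (π * (k + 1) - π / 12)) (by linarith) (by linarith) (by linarith) (by
    rw [h0]; congr 5; ring)
  rw [abs_of_nonneg (by linarith)]
  exact hψ.trans (by gcongr)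
end
end
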